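/- arXiv:1902.09034 — 2 statements merged into one kernel-verified Lean document; each statement's English description precedes it below -/
import Mathlib

section
/- Let m, n be positive integers and A ∈ M_{n,m}(𝔽_q((z⁻¹))) be non-degenerate. Then the set Bad(A) has Hausdorff dimension n. -/
/-!
Common setup: the field `𝔽_q((z⁻¹))` of formal power series over a finite field `K` of
cardinality `q`, modeled as the field `FF K` of formal Laurent series in `t = z⁻¹`,
together with its non-Archimedean norm, the embedding of the polynomial ring `𝔽_q[z]`,
distances to polynomial (vectors), Diophantine exponents, `Bad` sets, continued fractions
and best approximation sequences.
-/

open scoped Classical ENNReal NNReal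
open Filter

noncomputable section

set_option linter.unusedSectionVars false

namespace FPSDA

variable (K : Type*) [Field K] [Fintype K]

/-- The field `𝔽_q((z⁻¹))` of formal power series in `z⁻¹` over the finite field `K = 𝔽_q`,
modeled as the field of formal Laurent series in the variable `t = z⁻¹`. -/
def FF : Type _ := LaurentSeries K

instance : Field (FF K) := inferInstanceAs (Field (LaurentSeries K))

variable {K}

/-- The identity map, viewing an element of `𝔽_q((z⁻¹))` as a Laurent series in `t = z⁻¹`. -/
def toL (x : FF K) : LaurentSeries K := x

@[simp] lemma toL_zero : toL (0 : FF K) = 0 := rfl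
@[simp] lemma toL_add (x y : FF K) : toL (x + y) = toL x + toL y := rfl
@[simp] lemma toL_neg (x : FF K) : toL (-x) = -toL x := rfl
@[simp] lemma toL_sub (x y : FF K) : toL (x - y) = toL x - toL y := rfl
lemma toL_eq_zero {x : FF K} : toL x = 0 ↔ x = 0 := Iff.rfl

/-- The norm `‖x‖ = q ^ (deg x)` on `𝔽_q((z⁻¹))`, where
`deg x = - (order of x as a Laurent series in z⁻¹)`; `‖0‖ = 0`. -/
def fnorm (x : FF K) : ℝ :=
  if toL x = 0 then 0 else (Fintype.card K : ℝ) ^ (-(toL x).order)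

lemma one_le_q : (1 : ℝ) ≤ (Fintype.card K : ℝ) := by
  exact_mod_cast Fintype.card_pos

lemma fnorm_nonneg (x : FF K) : 0 ≤ fnorm x := by
  unfold fnorm
  split_ifs
  · exact le_refl 0
  · exact zpow_nonneg (by positivity) _

lemma fnorm_eq_zero {x : FF K} : fnorm x = 0 ↔ x = 0 := by
  unfold fnorm
  split_ifs with h
  · exact ⟨fun _ => toL_eq_zero.mp h, fun _ => rfl⟩
  · constructor
    · intro hc
      exact absurd hc (zpow_ne_zero _ (by
        have h0 : (0:ℝ) < (Fintype.card K : ℝ) := by positivity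
        exact ne_of_gt h0))
    · intro hc
      exact absurd (toL_eq_zero.mpr hc) h

lemma fnorm_neg (x : FF K) : fnorm (-x) = fnorm x := by
  unfold fnorm
  rw [toL_neg]
  simp [neg_eq_zero, HahnSeries.order_neg]

lemma fnorm_add_le (x y : FF K) : fnorm (x + y) ≤ max (fnorm x) (fnorm y) := by
  by_cases hxy : x + y = 0
  · rw [fnorm_eq_zero.mpr hxy]
    exact le_max_of_le_left (fnorm_nonneg x)
  by_cases hx : x = 0
  · rw [hx, zero_add]
    exact le_max_right _ _
  by_cases hy : y = 0
  · rw [hy, add_zero]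
    exact le_max_left _ _
  have horder : min (toL x).order (toL y).order ≤ (toL (x + y)).order := by
    rw [toL_add]
    exact HahnSeries.min_order_le_order_add (show toL x + toL y ≠ 0 from hxy)
  have h1 : fnorm (x + y) = (Fintype.card K : ℝ) ^ (-(toL (x+y)).order) := by
    unfold fnorm
    rw [if_neg (show toL (x + y) ≠ 0 from hxy)]
  rcases le_total (toL x).order (toL y).order with h | h
  · have h2 : (toL x).order ≤ (toL (x+y)).order := le_trans (by simp [min_eq_left h]) horder
    refine le_max_of_le_left ?_
    rw [h1]
    unfold fnorm
    rw [if_neg (show toL x ≠ 0 from hx)]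
    exact zpow_le_zpow_right₀ one_le_q (by omega)
  · have h2 : (toL y).order ≤ (toL (x+y)).order := le_trans (by simp [min_eq_right h]) horder
    refine le_max_of_le_right ?_
    rw [h1]
    unfold fnorm
    rw [if_neg (show toL y ≠ 0 from hy)]
    exact zpow_le_zpow_right₀ one_le_q (by omega)

/-- The (ultra)metric `dist x y = ‖x - y‖` on `𝔽_q((z⁻¹))`. -/
instance : MetricSpace (FF K) where
  dist x y := fnorm (x - y)
  dist_self x := by
    show fnorm (x - x) = 0
    rw [sub_self]
    exact fnorm_eq_zero.mpr rfl
  dist_comm x y := by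
    show fnorm (x - y) = fnorm (y - x)
    have h : x - y = -(y - x) := by ring
    rw [h, fnorm_neg]
  dist_triangle x y z := by
    show fnorm (x - z) ≤ fnorm (x - y) + fnorm (y - z)
    have h : x - z = (x - y) + (y - z) := by ring
    calc fnorm (x - z) ≤ max (fnorm (x - y)) (fnorm (y - z)) := by
          rw [h]; exact fnorm_add_le _ _
      _ ≤ fnorm (x - y) + fnorm (y - z) :=
        max_le (le_add_of_nonneg_right (fnorm_nonneg _)) (le_add_of_nonneg_left (fnorm_nonneg _))
  eq_of_dist_eq_zero := by
    intro x y h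
    have h' : x - y = 0 := fnorm_eq_zero.mp h
    exact sub_eq_zero.mp h'

instance : MeasurableSpace (FF K) := borel _
instance : BorelSpace (FF K) := ⟨rfl⟩

/-- The canonical embedding of the polynomial ring `𝔽_q[z]` into `𝔽_q((z⁻¹))`:
the variable `z` is sent to `t⁻¹ = single (-1) 1`. -/
def polyF (P : Polynomial K) : FF K :=
  Polynomial.aeval (HahnSeries.single (-1 : ℤ) (1 : K)) P

/-- Supremum norm of a vector with entries in `𝔽_q((z⁻¹))`. -/
def vnorm {ι : Type*} [Fintype ι] (v : ι → FF K) : ℝ := ⨆ i, fnorm (v i)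

/-- `⟨v⟩`, the distance from the vector `v` to the nearest polynomial vector. -/
def vdist {ι : Type*} [Fintype ι] (v : ι → FF K) : ℝ :=
  ⨅ y : ι → Polynomial K, vnorm (fun i => v i - polyF (y i))

/-- `⟨x⟩`, the distance from the scalar `x` to the nearest polynomial. -/
def sdist (x : FF K) : ℝ := ⨅ y : Polynomial K, fnorm (x - polyF y)

/-- The fractional part `{x} = Σ_{i ≥ 1} a_i z^{-i}` of `x = Σ_i a_i z^{-i}`. -/
def fracPart (x : FF K) : FF K :=
  (⟨fun i => if 1 ≤ i then (toL x).coeff i else 0, (toL x).isPWO_support'.mono (by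
      intro i hi
      by_cases h : (1:ℤ) ≤ i
      · simpa [Function.mem_support, h] using hi
      · simp [Function.mem_support, h] at hi)⟩ : LaurentSeries K)

/-- The integer part `[x] = Σ_{i ≤ 0} a_i z^{-i}` of `x = Σ_i a_i z^{-i}`, as a polynomial
in `z`. -/
def intPoly (x : FF K) : Polynomial K :=
  ∑ i ∈ Finset.range ((-(toL x).order).toNat + 1),
    Polynomial.monomial i ((toL x).coeff (-(i : ℤ)))

/-- `x ∈ 𝔽_q((z⁻¹))` is irrational if it is not in `𝔽_q(z)`, i.e. is not a ratio of two
polynomials in `z`. -/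
def FIrrational (x : FF K) : Prop :=
  ∀ P Q : Polynomial K, Q ≠ 0 → x * polyF Q ≠ polyF P

section Exponents

variable {m n : ℕ}

/-- The norm `‖x‖ = max_j ‖x_j‖` of a polynomial vector `x`. -/
def pnorm {ι : Type*} [Fintype ι] (x : ι → Polynomial K) : ℝ :=
  vnorm (fun i => (polyF (x i) : FF K))

/-- The system `⟨A x - θ⟩ ≤ H^{-ω}`, `‖x‖ ≤ H` has a polynomial solution `x`. -/
def Solv (A : Matrix (Fin n) (Fin m) (FF K)) (θ : Fin n → FF K) (ω H : ℝ) : Prop :=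
  ∃ x : Fin m → Polynomial K,
    vdist (A.mulVec (fun j => polyF (x j)) - θ) ≤ H ^ (-ω) ∧ pnorm x ≤ H

/-- The system `⟨A x⟩ ≤ H^{-ω}`, `‖x‖ ≤ H` has a nonzero polynomial solution `x`. -/
def SolvHom (A : Matrix (Fin n) (Fin m) (FF K)) (ω H : ℝ) : Prop :=
  ∃ x : Fin m → Polynomial K, x ≠ 0 ∧
    vdist (A.mulVec (fun j => polyF (x j))) ≤ H ^ (-ω) ∧ pnorm x ≤ H

/-- The inhomogeneous exponent `ω(A, θ)`: the supremum (in `[0,∞]`) of all `ω` such that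
for arbitrarily large `H` the system `⟨A x - θ⟩ ≤ H^{-ω}`, `‖x‖ ≤ H` has a polynomial
solution. -/
def omegaInhom (A : Matrix (Fin n) (Fin m) (FF K)) (θ : Fin n → FF K) : ℝ≥0∞ :=
  ⨆ (ω : ℝ) (_ : ∀ H₀ : ℝ, ∃ H : ℝ, H₀ ≤ H ∧ Solv A θ ω H), ENNReal.ofReal ω

/-- The uniform inhomogeneous exponent `ω̂(A, θ)`: as `ω(A, θ)`, but with a solution for
all sufficiently large `H`. -/
def omegaHatInhom (A : Matrix (Fin n) (Fin m) (FF K)) (θ : Fin n → FF K) : ℝ≥0∞ :=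
  ⨆ (ω : ℝ) (_ : ∃ H₀ : ℝ, ∀ H : ℝ, H₀ ≤ H → Solv A θ ω H), ENNReal.ofReal ω

/-- The homogeneous exponent `ω(A)`. -/
def omegaHom (A : Matrix (Fin n) (Fin m) (FF K)) : ℝ≥0∞ :=
  ⨆ (ω : ℝ) (_ : ∀ H₀ : ℝ, ∃ H : ℝ, H₀ ≤ H ∧ SolvHom A ω H), ENNReal.ofReal ω

/-- The uniform homogeneous exponent `ω̂(A)`. -/
def omegaHatHom (A : Matrix (Fin n) (Fin m) (FF K)) : ℝ≥0∞ :=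
  ⨆ (ω : ℝ) (_ : ∃ H₀ : ℝ, ∀ H : ℝ, H₀ ≤ H → SolvHom A ω H), ENNReal.ofReal ω

/-- `A` is non-degenerate: the `𝔽_q[z]`-module `Aᵀ 𝔽_q[z]ⁿ + 𝔽_q[z]^m ⊆ 𝔽_q((z⁻¹))^m` has
rank `m + n` over `𝔽_q[z]`, i.e. its `m + n` natural generators are linearly independent
over `𝔽_q[z]`; equivalently, no nonzero polynomial vector `u` makes `Aᵀ u` a polynomial
vector. -/
def Nondegenerate (A : Matrix (Fin n) (Fin m) (FF K)) : Prop :=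
  ∀ u : Fin n → Polynomial K,
    (∃ v : Fin m → Polynomial K,
      A.transpose.mulVec (fun i => polyF (u i)) = fun j => polyF (v j)) → u = 0

/-- `liminf_{x ∈ 𝔽_q[z]^m, ‖x‖ → ∞} ‖x‖^{m/n} ⟨A x - θ⟩`, computed in `[0, ∞]`. -/
def badLiminf (A : Matrix (Fin n) (Fin m) (FF K)) (θ : Fin n → FF K) : ℝ≥0∞ :=
  Filter.liminf
    (fun x : Fin m → Polynomial K =>
      ENNReal.ofReal ((pnorm x) ^ ((m : ℝ) / (n : ℝ)) *
        vdist (A.mulVec (fun j => polyF (x j)) - θ)))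
    (Filter.comap (fun x : Fin m → Polynomial K => pnorm x) Filter.atTop)

/-- The set `Bad^ε(A)` of `θ` in the unit polydisc `𝕀ⁿ` with
`liminf_{‖x‖ → ∞} ‖x‖^{m/n} ⟨A x - θ⟩ ≥ ε`. -/
def Bad (A : Matrix (Fin n) (Fin m) (FF K)) (ε : ℝ) : Set (Fin n → FF K) :=
  {θ | (∀ i, fnorm (θ i) < 1) ∧ ENNReal.ofReal ε ≤ badLiminf A θ}

/-- The set `Bad(A) = ⋃_{ε > 0} Bad^ε(A)`. -/
def BadAll (A : Matrix (Fin n) (Fin m) (FF K)) : Set (Fin n → FF K) :=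
  ⋃ (ε : ℝ) (_ : 0 < ε), Bad A ε

/-- `M(y) = ⟨Aᵀ y⟩` for a polynomial vector `y`. -/
def Mfun (A : Matrix (Fin n) (Fin m) (FF K)) (y : Fin n → Polynomial K) : ℝ :=
  vdist (A.transpose.mulVec (fun i => polyF (y i)))

/-- `y 1, y 2, …` is a sequence of best approximations related to `Aᵀ`:
`1 = Y_1 < Y_2 < ⋯`, `M_1 > M_2 > ⋯`, and `M(x) ≥ M_k` for every nonzero polynomial
vector `x` with `‖x‖ < Y_{k+1}` (the value `y 0` is irrelevant). -/
def IsBestApproxSeq (A : Matrix (Fin n) (Fin m) (FF K))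
    (y : ℕ → Fin n → Polynomial K) : Prop :=
  pnorm (y 1) = 1 ∧
  (∀ k, 1 ≤ k → pnorm (y k) < pnorm (y (k + 1))) ∧
  (∀ k, 1 ≤ k → Mfun A (y (k + 1)) < Mfun A (y k)) ∧
  (∀ k, 1 ≤ k → ∀ x : Fin n → Polynomial K, x ≠ 0 → pnorm x < pnorm (y (k + 1)) →
    Mfun A (y k) ≤ Mfun A x)

end Exponents

section Scalar

/-- The system `⟨ξ x - θ⟩ ≤ H^{-ω}`, `‖x‖ ≤ H` has a polynomial solution `x`. -/
def sSolv (ξ θ : FF K) (ω H : ℝ) : Prop :=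
  ∃ x : Polynomial K, sdist (ξ * polyF x - θ) ≤ H ^ (-ω) ∧ fnorm (polyF x) ≤ H

/-- The scalar inhomogeneous exponent `ω((ξ), θ)`. -/
def somegaInhom (ξ θ : FF K) : ℝ≥0∞ :=
  ⨆ (ω : ℝ) (_ : ∀ H₀ : ℝ, ∃ H : ℝ, H₀ ≤ H ∧ sSolv ξ θ ω H), ENNReal.ofReal ω

/-- The scalar uniform inhomogeneous exponent `ω̂((ξ), θ)`. -/
def somegaHatInhom (ξ θ : FF K) : ℝ≥0∞ :=
  ⨆ (ω : ℝ) (_ : ∃ H₀ : ℝ, ∀ H : ℝ, H₀ ≤ H → sSolv ξ θ ω H), ENNReal.ofReal ω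

/-- The scalar homogeneous exponent `ω((ξ))`. -/
def somegaHom (ξ : FF K) : ℝ≥0∞ :=
  ⨆ (ω : ℝ) (_ : ∀ H₀ : ℝ, ∃ H : ℝ, H₀ ≤ H ∧ ∃ x : Polynomial K, x ≠ 0 ∧
      sdist (ξ * polyF x) ≤ H ^ (-ω) ∧ fnorm (polyF x) ≤ H), ENNReal.ofReal ω

/-- `liminf_{x ∈ 𝔽_q[z], ‖x‖ → ∞} ‖x‖ ⟨α x - θ⟩`, computed in `[0, ∞]`. -/
def sBadLiminf (α θ : FF K) : ℝ≥0∞ :=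
  Filter.liminf
    (fun x : Polynomial K => ENNReal.ofReal (fnorm (polyF x) * sdist (α * polyF x - θ)))
    (Filter.comap (fun x : Polynomial K => fnorm (polyF x)) Filter.atTop)

/-- The set `Bad^ε(α)` of `θ ∈ 𝕀` with `liminf_{‖x‖ → ∞} ‖x‖ ⟨α x - θ⟩ ≥ ε`. -/
def sBad (α : FF K) (ε : ℝ) : Set (FF K) :=
  {θ | fnorm θ < 1 ∧ ENNReal.ofReal ε ≤ sBadLiminf α θ}

end Scalar

section CF

/-- The Gauss map `T x = 1/x - [1/x]` on `𝔽_q((z⁻¹))`. -/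
def gaussMap (x : FF K) : FF K := fracPart x⁻¹

/-- `pquot α k` is the `(k+1)`-st partial quotient `A_{k+1} = [1 / T^k α]` of the
continued fraction expansion of `α`. -/
def pquot (α : FF K) (k : ℕ) : Polynomial K := intPoly ((gaussMap^[k] α)⁻¹)

/-- `cfQ α k` is the denominator `Q_k` of the `k`-th convergent of the continued fraction
expansion of `α`: `Q_0 = 1`, `Q_1 = A_1`, `Q_{k+2} = A_{k+2} Q_{k+1} + Q_k`. -/
def cfQ (α : FF K) : ℕ → Polynomial K
  | 0 => 1
  | 1 => pquot α 0
  | (k + 2) => pquot α (k + 1) * cfQ α (k + 1) + cfQ α k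

/-- `α` is singular on average: for every `c > 0` the proportion of `l ∈ {1, …, N}` for
which `‖{Q α}‖ ≤ c 2^{-l}` has a solution `Q ∈ 𝔽_q[z]` with `0 < ‖Q‖ ≤ 2^l` tends to `1`
as `N → ∞`. -/
def SingularOnAverage (α : FF K) : Prop :=
  ∀ c : ℝ, 0 < c →
    Filter.Tendsto
      (fun N : ℕ =>
        (((Finset.Icc 1 N).filter (fun l : ℕ =>
            ∃ Q : Polynomial K, Q ≠ 0 ∧ fnorm (polyF Q) ≤ 2 ^ l ∧
              fnorm (fracPart (polyF Q * α)) ≤ c / 2 ^ l)).card : ℝ) / (N : ℝ))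
      Filter.atTop (nhds 1)

end CF

end FPSDA

open FPSDA MeasureTheory

section Aux
variable {K : Type*} [Field K] [Fintype K]

/-- coefficient of `z^{-k}` -/
def cf (x : FF K) (k : ℤ) : K := (toL x).coeff k

lemma cf_add (x y : FF K) (k : ℤ) : cf (x + y) k = cf x k + cf y k := by
  simp [cf]
lemma cf_sub (x y : FF K) (k : ℤ) : cf (x - y) k = cf x k - cf y k := by
  simp [cf]
lemma cf_zero (k : ℤ) : cf (0 : FF K) k = 0 := by
  simp [cf]
lemma cf_sum {ι : Type*} (s : Finset ι) (f : ι → FF K) (k : ℤ) :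
    cf (∑ i ∈ s, f i) k = ∑ i ∈ s, cf (f i) k := by
  induction s using Finset.induction_on with
  | empty => simp [cf_zero]
  | insert a s ha ih => rw [Finset.sum_insert ha, Finset.sum_insert ha, cf_add, ih]

lemma q_one_lt : (1 : ℝ) < (Fintype.card K : ℝ) := by
  exact_mod_cast Fintype.one_lt_card

lemma le_fnorm_of_cf {x : FF K} {k : ℤ} (h : cf x k ≠ 0) :
    (Fintype.card K : ℝ) ^ (-k) ≤ fnorm x := by
  have h0 : toL x ≠ 0 := by
    intro h1; exact h (by rw [cf, h1]; simp)
  unfold fnorm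
  rw [if_neg h0]
  apply zpow_le_zpow_right₀ one_le_q
  have := HahnSeries.order_le_of_coeff_ne_zero h
  omega

lemma fnorm_le_of_cf {x : FF K} {k : ℤ} (h : ∀ i < k, cf x i = 0) :
    fnorm x ≤ (Fintype.card K : ℝ) ^ (-k) := by
  by_cases h0 : toL x = 0
  · unfold fnorm
    rw [if_pos h0]
    exact zpow_nonneg (by positivity) _
  · by_contra hc
    have h2 := (HahnSeries.le_order_iff_forall h0).2 h
    apply hc
    unfold fnorm
    rw [if_neg h0]
    exact zpow_le_zpow_right₀ one_le_q (by omega)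

lemma cf_of_fnorm_lt {x : FF K} {k : ℤ} (h : fnorm x < (Fintype.card K : ℝ) ^ (-k)) :
    ∀ i ≤ k, cf x i = 0 := by
  intro i hi
  by_contra hc
  have := le_fnorm_of_cf hc
  have h2 : (Fintype.card K : ℝ) ^ (-k) ≤ (Fintype.card K : ℝ) ^ (-i) :=
    zpow_le_zpow_right₀ one_le_q (by omega)
  linarith

lemma polyF_add (P Q : Polynomial K) : polyF (P + Q) = polyF P + polyF Q :=
  map_add (Polynomial.aeval (HahnSeries.single (-1 : ℤ) (1 : K))) P Q

lemma polyF_zero : polyF (0 : Polynomial K) = 0 :=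
  map_zero (Polynomial.aeval (HahnSeries.single (-1 : ℤ) (1 : K)))

lemma polyF_monomial (k : ℕ) (a : K) :
    toL (polyF (Polynomial.monomial k a)) = HahnSeries.single (-(k : ℤ)) a := by
  show Polynomial.aeval (HahnSeries.single (-1 : ℤ) (1 : K)) (Polynomial.monomial k a) = _
  rw [Polynomial.aeval_monomial, HahnSeries.single_pow]
  have h : (algebraMap K (HahnSeries ℤ K)) a = HahnSeries.single 0 a := by
    rw [HahnSeries.algebraMap_apply', PowerSeries.algebraMap_apply]
    simp [HahnSeries.C_apply]
  rw [h]
  simp [HahnSeries.single_mul_single]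

lemma cf_polyF_mul (P : Polynomial K) (w : FF K) (l : ℤ) :
    cf (polyF P * w) l = P.sum fun k a => a * cf w (l + k) := by
  induction P using Polynomial.induction_on' with
  | add p q hp hq =>
    rw [polyF_add, add_mul, cf_add, hp, hq, Polynomial.sum_add_index]
    · intro i; simp
    · intro i a b; ring
  | monomial k a =>
    rw [Polynomial.sum_monomial_index _ _ (by simp)]
    show (toL (polyF (Polynomial.monomial k a)) * toL w).coeff l = _
    rw [polyF_monomial]
    have := HahnSeries.coeff_single_mul_add (r := a) (x := toL w) (a := l + k) (b := -(k:ℤ))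
    rw [show l + (k:ℤ) + -(k:ℤ) = l by ring] at this
    exact this

lemma cf_polyF_mul' {P : Polynomial K} {D : ℕ} (hP : P.natDegree ≤ D) (w : FF K) (l : ℤ) :
    cf (polyF P * w) l = ∑ k ∈ Finset.range (D + 1), P.coeff k * cf w (l + k) := by
  rw [cf_polyF_mul, Polynomial.sum_over_range' _ _ (D + 1) (by omega)]
  intro k; simp

lemma cf_one (k : ℤ) : cf (1 : FF K) k = if k = 0 then 1 else 0 := by
  show (1 : LaurentSeries K).coeff k = _
  rw [HahnSeries.coeff_one]
  split_ifs <;> rfl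

lemma cf_polyF_pos (P : Polynomial K) {l : ℤ} (hl : 1 ≤ l) : cf (polyF P) l = 0 := by
  rw [← mul_one (polyF P), cf_polyF_mul' le_rfl]
  apply Finset.sum_eq_zero
  intro k _
  rw [cf_one, if_neg (by omega), mul_zero]

lemma cf_polyF_neg (P : Polynomial K) (k : ℕ) : cf (polyF P) (-(k:ℤ)) = P.coeff k := by
  rw [← mul_one (polyF P), cf_polyF_mul' (D := P.natDegree + k) (by omega)]
  rw [Finset.sum_eq_single k]
  · simp [cf_one]
  · intro b _ hb
    rw [cf_one, if_neg (by omega), mul_zero]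
  · intro h
    exact absurd (Finset.mem_range.2 (by omega)) h

lemma cf_top {P : Polynomial K} {e : ℕ} (hP : P.natDegree ≤ e) {w : FF K} {k : ℤ}
    (hw : ∀ i < k, cf w i = 0) : cf (polyF P * w) (k - e) = P.coeff e * cf w k := by
  rw [cf_polyF_mul' hP, Finset.sum_eq_single e]
  · simp
  · intro b hb hbe
    have := Finset.mem_range.1 hb
    rw [hw _ (by omega), mul_zero]
  · intro h; exact absurd (Finset.mem_range.2 (by omega)) h

lemma cf_low {P : Polynomial K} {e : ℕ} (hP : P.natDegree ≤ e) {w : FF K} {k : ℤ}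
    (hw : ∀ i < k, cf w i = 0) {l : ℤ} (hl : l < k - e) : cf (polyF P * w) l = 0 := by
  rw [cf_polyF_mul' hP]
  apply Finset.sum_eq_zero
  intro b hb
  have := Finset.mem_range.1 hb
  rw [hw _ (by omega), mul_zero]

/-- coefficients `1..h` of `Aᵀ u` vanish -/
def PP {m n : ℕ} (A : Matrix (Fin n) (Fin m) (FF K)) (h : ℕ) (u : Fin n → Polynomial K) : Prop :=
  ∀ j, ∀ l : ℤ, 1 ≤ l → l ≤ h → cf (∑ i, polyF (u i) * A i j) l = 0

/-- exact degree `e` -/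
def ED {n : ℕ} (e : ℕ) (u : Fin n → Polynomial K) : Prop :=
  (∀ i, (u i).natDegree ≤ e) ∧ ∃ i, (u i).coeff e ≠ 0

lemma finite_ED (n e : ℕ) : {u : Fin n → Polynomial K | ED e u}.Finite := by
  have h1 : {p : Polynomial K | p.natDegree ≤ e}.Finite := by
    have : Finite (Polynomial.degreeLT K (e+1)) :=
      Finite.of_equiv _ (Polynomial.degreeLTEquiv K (e+1)).toEquiv.symm
    have h2 : (Polynomial.degreeLT K (e+1) : Set (Polynomial K)).Finite := Set.toFinite _
    refine h2.subset ?_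
    intro p hp
    rw [SetLike.mem_coe, Polynomial.mem_degreeLT]
    refine lt_of_le_of_lt (Polynomial.degree_le_natDegree) ?_
    have : p.natDegree ≤ e := hp
    exact_mod_cast Nat.lt_succ_of_le this
  refine (Set.Finite.pi' (fun _ : Fin n => h1)).subset ?_
  intro u hu i
  exact hu.1 i

lemma exists_best {m n : ℕ} (A : Matrix (Fin n) (Fin m) (FF K)) (e : ℕ)
    (hne : ∃ u : Fin n → Polynomial K, ED e u) :
    ∃ w : Fin n → Polynomial K, ED e w ∧ ∀ h u, ED e u → PP A h u → PP A h w := by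
  by_contra hc
  push Not at hc
  have hc' : ∀ w : {u : Fin n → Polynomial K // ED e u}, ∃ h, ∃ u, ED e u ∧ PP A h u ∧ ¬ PP A h w.1 := by
    intro w
    obtain ⟨h, u, h1, h2, h3⟩ := hc w.1 w.2
    exact ⟨h, u, h1, h2, h3⟩
  choose H hH using hc'
  have : Finite {u : Fin n → Polynomial K // ED e u} := (finite_ED n e)
  have : Nonempty {u : Fin n → Polynomial K // ED e u} := by
    obtain ⟨u, hu⟩ := hne; exact ⟨⟨u, hu⟩⟩
  obtain ⟨w, hw⟩ := Finite.exists_max H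
  obtain ⟨u, h1, h2, -⟩ := hH w
  obtain ⟨u', -, -, h3⟩ := hH ⟨u, h1⟩
  apply h3
  intro j l hl hl'
  refine h2 j l hl (hl'.trans ?_)
  exact_mod_cast hw ⟨u, h1⟩

lemma exists_W {m n : ℕ} (A : Matrix (Fin n) (Fin m) (FF K)) :
    ∃ W : ℕ → Fin n → Polynomial K, ∀ e h u, ED e u → PP A h u → ED e (W e) ∧ PP A h (W e) := by
  have : ∀ e, ∃ w : Fin n → Polynomial K, ∀ h u, ED e u → PP A h u → ED e w ∧ PP A h w := by
    intro e
    by_cases hne : ∃ u : Fin n → Polynomial K, ED e u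
    · obtain ⟨w, h1, h2⟩ := exists_best A e hne
      exact ⟨w, fun h u hu hp => ⟨h1, h2 h u hu hp⟩⟩
    · exact ⟨0, fun h u hu => absurd ⟨u, hu⟩ hne⟩
  choose W hW using this
  exact ⟨W, hW⟩

lemma exists_ED {n : ℕ} {D : ℕ} (u : Fin n → Polynomial K) (hu : u ≠ 0)
    (hD : ∀ i, (u i).natDegree ≤ D) : ∃ e ≤ D, ED e u := by
  obtain ⟨i1, hi1⟩ := Function.ne_iff.1 hu
  obtain ⟨i0, -, h0⟩ := Finset.exists_max_image Finset.univ (fun i => (u i).degree) ⟨i1, Finset.mem_univ _⟩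
  have hne : u i0 ≠ 0 := by
    intro hz
    have := h0 i1 (Finset.mem_univ _)
    rw [hz, Polynomial.degree_zero, le_bot_iff, Polynomial.degree_eq_bot] at this
    exact hi1 this
  refine ⟨(u i0).natDegree, hD i0, fun i => Polynomial.natDegree_le_natDegree (h0 i (Finset.mem_univ _)), i0, ?_⟩
  simpa using hne

lemma exists_small {m n : ℕ} (A : Matrix (Fin n) (Fin m) (FF K)) (h D : ℕ)
    (hD : m * h < n * (D + 1)) :
    ∃ e ≤ D, ∃ u : Fin n → Polynomial K, ED e u ∧ PP A h u := by
  let Mx : Matrix (Fin m × Fin h) (Fin n × Fin (D+1)) K :=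
    fun jl ik => cf (A ik.1 jl.1) ((jl.2 : ℤ) + 1 + (ik.2 : ℤ))
  have hk : LinearMap.ker Mx.mulVecLin ≠ ⊥ := by
    apply LinearMap.ker_ne_bot_of_finrank_lt
    simpa using hD
  obtain ⟨c, hc, hc0⟩ := Submodule.exists_mem_ne_zero_of_ne_bot hk
  rw [LinearMap.mem_ker, Matrix.mulVecLin_apply] at hc
  let u : Fin n → Polynomial K := fun i => ∑ k : Fin (D+1), Polynomial.monomial (k : ℕ) (c (i, k))
  have hcoeff : ∀ i (k : Fin (D+1)), (u i).coeff k = c (i, k) := by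
    intro i k
    simp only [u, Polynomial.finsetSum_coeff, Polynomial.coeff_monomial]
    rw [Finset.sum_eq_single k]
    · simp
    · intro b _ hb
      rw [if_neg (fun h => hb (Fin.ext h))]
    · simp
  have hdeg : ∀ i, (u i).natDegree ≤ D := by
    intro i
    apply Polynomial.natDegree_sum_le_of_forall_le
    intro k _
    exact (Polynomial.natDegree_monomial_le _).trans (by omega)
  have hu : u ≠ 0 := by
    intro hz
    apply hc0
    ext ⟨i, k⟩
    rw [← hcoeff, hz]; simp
  obtain ⟨e, he, hED⟩ := exists_ED u hu hdeg
  refine ⟨e, he, u, hED, ?_⟩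
  intro j l hl hl'
  rw [cf_sum]
  obtain ⟨l0, rfl⟩ : ∃ l0 : ℕ, l = l0 + 1 := ⟨(l-1).toNat, by omega⟩
  have := congrFun hc (j, ⟨l0, by omega⟩)
  simp only [Matrix.mulVec, dotProduct, Fintype.sum_prod_type, Mx, Pi.zero_apply] at this
  rw [← this]
  apply Finset.sum_congr rfl
  intro i _
  rw [cf_polyF_mul' (hdeg i), Finset.sum_range]
  apply Finset.sum_congr rfl
  intro k _
  rw [hcoeff, mul_comm]
end Aux

section Aux2
variable {K : Type*} [Field K] [Fintype K]

lemma polyF_mul (P Q : Polynomial K) : polyF (P * Q) = polyF P * polyF Q :=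
  map_mul (Polynomial.aeval (HahnSeries.single (-1 : ℤ) (1 : K))) P Q

lemma fnorm_le_vnorm {ι : Type*} [Fintype ι] (v : ι → FF K) (i : ι) : fnorm (v i) ≤ vnorm v :=
  le_ciSup (f := fun i => fnorm (v i)) (Set.finite_range _).bddAbove i

lemma vnorm_lower {m n : ℕ} {A : Matrix (Fin n) (Fin m) (FF K)} {θ : Fin n → FF K}
    {L X e : ℕ} {w : Fin n → Polynomial K} {x : Fin m → Polynomial K}
    (hx : ∀ j, (x j).natDegree ≤ X) (hw : ∀ i, (w i).natDegree ≤ e) (hP : PP A (X + L) w)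
    (hθ : ∃ l : ℤ, 1 ≤ l ∧ l ≤ L ∧ cf (∑ i, polyF (w i) * θ i) l ≠ 0)
    (y : Fin n → Polynomial K) :
    (Fintype.card K : ℝ) ^ (-((L : ℤ) + e)) ≤
      vnorm (fun i => (A.mulVec (fun j => polyF (x j)) - θ) i - polyF (y i)) := by
  by_contra hc
  push Not at hc
  obtain ⟨l, hl1, hlL, hl⟩ := hθ
  apply hl
  set δ : Fin n → FF K := fun i => (A.mulVec (fun j => polyF (x j)) - θ) i - polyF (y i) with hδ
  have h1 : ∀ i, ∀ k < (L : ℤ) + e + 1, cf (δ i) k = 0 := by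
    intro i k hk
    exact cf_of_fnorm_lt ((fnorm_le_vnorm δ i).trans_lt hc) k (by omega)
  have h2 : cf (∑ i, polyF (w i) * δ i) l = 0 := by
    rw [cf_sum]
    apply Finset.sum_eq_zero
    intro i _
    exact cf_low (hw i) (h1 i) (by omega)
  have h3 : ∑ i, polyF (w i) * θ i = ∑ j, polyF (x j) * (∑ i, polyF (w i) * A i j)
      - ∑ i, polyF (w i * y i) - ∑ i, polyF (w i) * δ i := by
    have : ∑ j, polyF (x j) * (∑ i, polyF (w i) * A i j) =
        ∑ i, polyF (w i) * A.mulVec (fun j => polyF (x j)) i := by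
      simp only [Matrix.mulVec, dotProduct, Finset.mul_sum]
      rw [Finset.sum_comm]
      refine Finset.sum_congr rfl fun i _ => Finset.sum_congr rfl fun j _ => ?_
      ring
    rw [this, ← Finset.sum_sub_distrib, ← Finset.sum_sub_distrib]
    refine Finset.sum_congr rfl fun i _ => ?_
    simp only [hδ, Pi.sub_apply, polyF_mul]
    ring
  rw [h3, cf_sub, cf_sub, h2, cf_sum, cf_sum]
  rw [Finset.sum_eq_zero, Finset.sum_eq_zero]
  · simp
  · intro i _
    exact cf_polyF_pos _ hl1
  · intro j _
    rw [cf_polyF_mul' (hx j)]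
    apply Finset.sum_eq_zero
    intro k hk
    have := Finset.mem_range.1 hk
    rw [hP j _ (by omega) (by push_cast; omega), mul_zero]

lemma mem_BadAll {m n : ℕ} (hn : 0 < n) {A : Matrix (Fin n) (Fin m) (FF K)} {θ : Fin n → FF K}
    (hθ1 : ∀ i, fnorm (θ i) < 1)
    {W : ℕ → Fin n → Polynomial K}
    (hW : ∀ e h u, ED e u → PP A h u → ED e (W e) ∧ PP A h (W e)) {L : ℕ}
    (hθ : ∀ e, ED e (W e) → ∃ l : ℤ, 1 ≤ l ∧ l ≤ L ∧ cf (∑ i, polyF (W e i) * θ i) l ≠ 0) :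
    θ ∈ BadAll A := by
  set q : ℝ := (Fintype.card K : ℝ) with hq
  have hq1 : 1 < q := q_one_lt
  have hq0 : 0 < q := by linarith
  have hn' : (0 : ℝ) < n := by exact_mod_cast hn
  refine Set.mem_iUnion₂.2 ⟨q ^ (-(L : ℝ) - m * L / n), Real.rpow_pos_of_pos hq0 _, hθ1, ?_⟩
  unfold badLiminf
  refine Filter.le_liminf_of_le (by isBoundedDefault) ?_
  have hev : ∀ᶠ x : Fin m → Polynomial K in
      Filter.comap (fun x : Fin m → Polynomial K => (pnorm x : ℝ)) Filter.atTop, 1 ≤ pnorm x :=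
    Filter.Eventually.comap (Filter.eventually_ge_atTop (1:ℝ)) _
  filter_upwards [hev] with x hx
  apply ENNReal.ofReal_le_ofReal
  have hx0 : x ≠ 0 := by
    rintro rfl
    have : pnorm (0 : Fin m → Polynomial K) ≤ 0 := by
      apply Real.iSup_le _ le_rfl
      intro i
      show fnorm (polyF (0 : Polynomial K)) ≤ 0
      rw [polyF_zero, fnorm_eq_zero.2 rfl]
    linarith
  obtain ⟨X, -, hX, j0, hj0⟩ := exists_ED x hx0 (D := Finset.univ.sup fun j => (x j).natDegree)
    (fun j => Finset.le_sup (f := fun j => (x j).natDegree) (Finset.mem_univ j))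
  have hpn : q ^ X ≤ pnorm x := by
    have h1 := le_fnorm_of_cf (x := polyF (x j0)) (k := -(X:ℤ)) (by rwa [cf_polyF_neg])
    rw [neg_neg, zpow_natCast] at h1
    exact h1.trans (fnorm_le_vnorm (fun j => (polyF (x j) : FF K)) j0)
  obtain ⟨e, he, u, hu1, hu2⟩ := exists_small A (X + L) (m * (X + L) / n) (Nat.lt_mul_div_succ _ hn)
  obtain ⟨hW1, hW2⟩ := hW e _ u hu1 hu2
  have hne : n * e ≤ m * (X + L) := (Nat.mul_le_mul_left n he).trans (Nat.mul_div_le _ _)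
  have hvd : q ^ (-((L : ℝ) + e)) ≤ vdist (A.mulVec (fun j => polyF (x j)) - θ) := by
    unfold vdist
    refine le_ciInf fun y => ?_
    have := vnorm_lower hX hW1.1 hW2 (hθ e hW1) y
    rw [← Real.rpow_intCast] at this
    push_cast at this
    exact this
  have hpp : q ^ ((X : ℝ) * (m / n)) ≤ pnorm x ^ ((m : ℝ) / n) := by
    rw [Real.rpow_mul hq0.le, Real.rpow_natCast]
    exact Real.rpow_le_rpow (by positivity) hpn (by positivity)
  calc q ^ (-(L : ℝ) - m * L / n) ≤ q ^ ((X : ℝ) * (m / n)) * q ^ (-((L : ℝ) + e)) := by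
        rw [← Real.rpow_add hq0]
        apply Real.rpow_le_rpow_of_exponent_le hq1.le
        have h1 : (n : ℝ) * e ≤ m * (X + L) := by exact_mod_cast hne
        have h2 : (e : ℝ) ≤ m * (X + L) / n := by
          rw [le_div_iff₀ hn']; linarith
        have h3 : (m : ℝ) * (X + L) / n = X * (m / n) + m * L / n := by
          field_simp
        linarith
    _ ≤ _ := mul_le_mul hpp hvd (by positivity) (Real.rpow_nonneg (by linarith) _)
end Aux2

section Tree

/-- prefixes of a branch -/
def preSeq {B : Type*} {M : ℕ} (ι : ℕ → (ℕ → B) → Fin M → B) (β₀ : ℕ → B) (d : ℕ → Fin M) :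
    ℕ → (ℕ → B)
  | 0 => β₀
  | (b + 1) => Function.update (preSeq ι β₀ d b) b (ι b (preSeq ι β₀ d b) (d b))

lemma tree {B : Type*} [Nonempty B] {M : ℕ} (Good : ℕ → (ℕ → B) → Prop)
    (hcongr : ∀ b β β', (∀ k ≤ b, β k = β' k) → Good b β → Good b β')
    (hι : ∀ b β, ∃ ι : Fin M → B, Function.Injective ι ∧ ∀ c, Good b (Function.update β b (ι c))) :
    ∃ Φ : (ℕ → Fin M) → (ℕ → B), (∀ d b, Good b (Φ d)) ∧
      ∀ d d' b, (∀ k < b, d k = d' k) → d b ≠ d' b → Φ d b ≠ Φ d' b := by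
  choose ι hinj hgood using hι
  let β₀ : ℕ → B := fun _ => Classical.arbitrary B
  let pre := preSeq ι β₀
  have hstable : ∀ d b k, k < b → pre d b k = pre d (k + 1) k := by
    intro d b
    induction b with
    | zero => intro k hk; omega
    | succ b ih =>
      intro k hk
      rcases Nat.lt_succ_iff_lt_or_eq.1 hk with h | h
      · rw [← ih k h]
        show Function.update (preSeq ι β₀ d b) b _ k = _
        rw [Function.update_of_ne (by omega)]
      · subst h; rfl
  refine ⟨fun d b => pre d (b + 1) b, ?_, ?_⟩
  · intro d b
    refine hcongr b (pre d (b + 1)) _ ?_ (hgood b (pre d b) (d b))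
    intro k hk
    exact hstable d (b + 1) k (by omega)
  · intro d d' b hlt hne
    have hpre : ∀ c ≤ b, pre d c = pre d' c := by
      intro c
      induction c with
      | zero => intro _; rfl
      | succ c ih =>
        intro hc
        show Function.update (preSeq ι β₀ d c) c (ι c (preSeq ι β₀ d c) (d c)) =
          Function.update (preSeq ι β₀ d' c) c (ι c (preSeq ι β₀ d' c) (d' c))
        have h1 : preSeq ι β₀ d c = preSeq ι β₀ d' c := ih (by omega)
        rw [h1, hlt c (by omega)]
    have h1 : preSeq ι β₀ d b = preSeq ι β₀ d' b := hpre b le_rfl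
    show Function.update (preSeq ι β₀ d b) b (ι b (preSeq ι β₀ d b) (d b)) b ≠
          Function.update (preSeq ι β₀ d' b) b (ι b (preSeq ι β₀ d' b) (d' b)) b
    rw [Function.update_self, Function.update_self, h1]
    exact fun h => hne (hinj _ _ h)
end Tree

section Aux3
variable {K : Type*} [Field K] [Fintype K]

/-- point with given digits -/
def mkT {n : ℕ} (a : ℕ → Fin n → K) (i : Fin n) : FF K :=
  HahnSeries.ofSuppBddBelow (fun k : ℤ => if 1 ≤ k then a (k - 1).toNat i else 0) (by
    refine ⟨1, ?_⟩
    intro k hk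
    by_contra hc
    exact hk (if_neg hc))

lemma cf_mkT {n : ℕ} (a : ℕ → Fin n → K) (i : Fin n) (k : ℤ) :
    cf (mkT a i) k = if 1 ≤ k then a (k - 1).toNat i else 0 := rfl

lemma fnorm_mkT {n : ℕ} (a : ℕ → Fin n → K) (i : Fin n) : fnorm (mkT a i) < 1 := by
  have h : fnorm (mkT a i) ≤ (Fintype.card K : ℝ) ^ (-1 : ℤ) := by
    apply fnorm_le_of_cf
    intro k hk
    rw [cf_mkT, if_neg (by omega)]
  refine h.trans_lt ?_
  rw [zpow_neg_one]
  exact inv_lt_one_of_one_lt₀ q_one_lt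

/-- point with given digit blocks -/
def Th {n N : ℕ} [NeZero N] (β : ℕ → Fin N → Fin n → K) : Fin n → FF K :=
  mkT (fun s => β (s / N) (Fin.ofNat N s))

lemma cf_Th {n N : ℕ} [NeZero N] (β : ℕ → Fin N → Fin n → K) (i : Fin n) (b : ℕ) (r : Fin N) :
    cf (Th β i) ((b : ℤ) * N + r + 1) = β b r i := by
  have hN : 0 < N := Nat.pos_of_ne_zero (NeZero.ne N)
  have hz : (0 : ℤ) ≤ (b : ℤ) * N := by positivity
  rw [Th, cf_mkT, if_pos (by omega)]
  have h1 : ((b : ℤ) * N + r + 1 - 1).toNat = N * b + r := by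
    have : ((b : ℤ) * N + r + 1 - 1) = ((N * b + r : ℕ) : ℤ) := by push_cast; ring
    rw [this, Int.toNat_natCast]
  rw [h1]
  have h2 : (N * b + (r : ℕ)) / N = b := by
    rw [Nat.mul_add_div hN, Nat.div_eq_of_lt r.2, add_zero]
  have h3 : Fin.ofNat N (N * b + (r : ℕ)) = r := by
    apply Fin.ext
    rw [Fin.val_ofNat, Nat.mul_add_mod, Nat.mod_eq_of_lt r.2]
  rw [h2, h3]

lemma cf_Th_sub {n N : ℕ} [NeZero N] (β β' : ℕ → Fin N → Fin n → K) (b r : ℕ) (hr : r ≤ N)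
    (h : ∀ k < b, β k = β' k) (h' : ∀ s : Fin N, s < r → β b s = β' b s) (i : Fin n) :
    ∀ k < (b : ℤ) * N + r + 1, cf (Th β i - Th β' i) k = 0 := by
  have hN : 0 < N := Nat.pos_of_ne_zero (NeZero.ne N)
  intro k hk
  rw [cf_sub, Th, Th, cf_mkT, cf_mkT]
  split_ifs with h1
  · obtain ⟨s, rfl⟩ : ∃ s : ℕ, k = s + 1 := ⟨(k-1).toNat, by omega⟩
    have hs : s < b * N + r := by zify; omega
    rw [show ((s : ℤ) + 1 - 1).toNat = s by omega]
    rcases lt_or_ge (s / N) b with h2 | h2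
    · rw [h _ h2, sub_self]
    · have h3 : s / N = b ∨ r = N ∧ False ∨ b < s / N := by omega
      have hsdm := Nat.div_add_mod s N
      have h4 : s / N = b := by
        apply le_antisymm _ h2
        have : s < (b + 1) * N := by rw [add_mul]; omega
        exact Nat.lt_succ_iff.1 ((Nat.div_lt_iff_lt_mul hN).2 this)
      rw [h4, h', sub_self]
      rw [Fin.val_ofNat]
      rw [h4] at hsdm
      have := mul_comm N b
      omega
  · simp

/-- the constraint handled at block `b` -/
def GoodB {n N : ℕ} [NeZero N] (W : ℕ → Fin n → Polynomial K) (b : ℕ)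
    (β : ℕ → Fin N → Fin n → K) : Prop :=
  ∀ e, e < b * N → b * N ≤ e + N → ED e (W e) →
    ∃ r : Fin N, cf (∑ i, polyF (W e i) * Th β i) ((b : ℤ) * N + r + 1 - e) ≠ 0

lemma GoodB_congr {n N : ℕ} [NeZero N] (W : ℕ → Fin n → Polynomial K) (b : ℕ)
    (β β' : ℕ → Fin N → Fin n → K) (h : ∀ k ≤ b, β k = β' k) (hg : GoodB W b β) :
    GoodB W b β' := by
  intro e he1 he2 hed
  obtain ⟨r, hr⟩ := hg e he1 he2 hed
  refine ⟨r, ?_⟩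
  convert hr using 1
  symm
  rw [← sub_eq_zero, ← cf_sub, ← Finset.sum_sub_distrib, cf_sum]
  apply Finset.sum_eq_zero
  intro i _
  rw [← mul_sub]
  refine cf_low (hed.1 i) (cf_Th_sub β β' b N le_rfl (fun k hk => h k hk.le) (fun s _ => by rw [h b le_rfl]) i) ?_
  have := r.2
  omega

lemma bad_card {n N : ℕ} [NeZero N] (w : Fin n → Polynomial K) (b e : ℕ) (he : ED e w)
    (β : ℕ → Fin N → Fin n → K) :
    (Finset.univ.filter fun a : Fin N → Fin n → K =>
      ∀ r : Fin N, cf (∑ i, polyF (w i) * Th (Function.update β b a) i)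
        ((b : ℤ) * N + r + 1 - e) = 0).card ≤ Fintype.card K ^ ((n - 1) * N) := by
  obtain ⟨hdeg, i0, hi0⟩ := he
  have hcard : Fintype.card (Fin N → {i : Fin n // i ≠ i0} → K) = Fintype.card K ^ ((n - 1) * N) := by
    rw [Fintype.card_fun, Fintype.card_fun, Fintype.card_fin, Fintype.card_subtype_compl]
    simp [pow_mul]
  rw [← hcard, ← Finset.card_univ]
  refine Finset.card_le_card_of_injOn (fun a r i => a r i.1) (fun _ _ => Finset.mem_coe.2 (Finset.mem_univ _)) ?_
  intro a ha a' ha' haa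
  simp only [Finset.coe_filter, Finset.mem_univ, true_and, Set.mem_ofPred_eq] at ha ha'
  have key : ∀ r : ℕ, ∀ hr : r < N, a ⟨r, hr⟩ = a' ⟨r, hr⟩ := by
    intro r
    induction r using Nat.strong_induction_on with
    | _ r ih =>
      intro hr
      have hlow := cf_Th_sub (Function.update β b a) (Function.update β b a') b r hr.le
        (fun k hk => by rw [Function.update_of_ne hk.ne, Function.update_of_ne hk.ne])
        (fun s hs => by
          rw [Function.update_self, Function.update_self]
          exact ih s hs s.2)
      have h1 : cf (∑ i, polyF (w i) * (Th (Function.update β b a) i - Th (Function.update β b a') i))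
          ((b : ℤ) * N + r + 1 - e) = 0 := by
        simp only [mul_sub]
        rw [Finset.sum_sub_distrib, cf_sub, ha ⟨r, hr⟩, ha' ⟨r, hr⟩, sub_zero]
      rw [cf_sum] at h1
      have h2 : ∀ i, cf (Th (Function.update β b a) i - Th (Function.update β b a') i)
          ((b : ℤ) * N + r + 1) = a ⟨r, hr⟩ i - a' ⟨r, hr⟩ i := by
        intro i
        have e1 := cf_Th (Function.update β b a) i b ⟨r, hr⟩
        have e2 := cf_Th (Function.update β b a') i b ⟨r, hr⟩
        rw [Function.update_self] at e1 e2
        rw [cf_sub, ← e1, ← e2]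
      have hoff : ∀ i, i ≠ i0 → a ⟨r, hr⟩ i = a' ⟨r, hr⟩ i := by
        intro i hi
        exact congrFun (congrFun haa ⟨r, hr⟩) ⟨i, hi⟩
      rw [Finset.sum_eq_single i0] at h1
      · rw [cf_top (hdeg i0) (hlow i0), h2] at h1
        have h3 := (mul_eq_zero.1 h1).resolve_left hi0
        ext i
        by_cases hi : i = i0
        · rw [hi]; exact sub_eq_zero.1 h3
        · exact hoff i hi
      · intro i _ hi
        rw [cf_top (hdeg i) (hlow i), h2, hoff i hi, sub_self, mul_zero]
      · simp
  ext1 r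
  exact key r r.2

lemma exists_inj {n N : ℕ} [NeZero N] (hn : 0 < n) (W : ℕ → Fin n → Polynomial K) (b : ℕ)
    (β : ℕ → Fin N → Fin n → K) :
    ∃ ι : Fin (Fintype.card K ^ (n * N - 1)) → (Fin N → Fin n → K), Function.Injective ι ∧
      ∀ c, GoodB W b (Function.update β b (ι c)) := by
  have hN : 0 < N := Nat.pos_of_ne_zero (NeZero.ne N)
  set q := Fintype.card K with hq
  have hq2 : 2 ≤ q := Fintype.one_lt_card
  let S : Finset (Fin N → Fin n → K) := Finset.univ.filter fun a => GoodB W b (Function.update β b a)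
  let I : Finset ℕ := (Finset.Ico (b * N - N) (b * N)).filter fun e => ED e (W e)
  let Bd : ℕ → Finset (Fin N → Fin n → K) := fun e => Finset.univ.filter fun a =>
      ∀ r : Fin N, cf (∑ i, polyF (W e i) * Th (Function.update β b a) i)
        ((b : ℤ) * N + r + 1 - e) = 0
  have hcover : Finset.univ ⊆ S ∪ I.biUnion Bd := by
    intro a _
    by_cases ha : GoodB W b (Function.update β b a)
    · exact Finset.mem_union_left _ (Finset.mem_filter.2 ⟨Finset.mem_univ _, ha⟩)
    · apply Finset.mem_union_right
      unfold GoodB at ha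
      push Not at ha
      obtain ⟨e, h1, h2, h3, h4⟩ := ha
      refine Finset.mem_biUnion.2 ⟨e, Finset.mem_filter.2 ⟨Finset.mem_Ico.2 ⟨by omega, h1⟩, h3⟩, ?_⟩
      exact Finset.mem_filter.2 ⟨Finset.mem_univ _, h4⟩
  have hI : I.card ≤ N := by
    refine (Finset.card_filter_le _ _).trans ?_
    rw [Nat.card_Ico]; omega
  have hbi : (I.biUnion Bd).card ≤ N * q ^ ((n - 1) * N) := by
    refine (Finset.card_biUnion_le_card_mul _ _ (q ^ ((n - 1) * N)) ?_).trans (Nat.mul_le_mul_right _ hI)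
    intro e he
    exact bad_card (W e) b e (Finset.mem_filter.1 he).2 β
  have htot : (Finset.univ : Finset (Fin N → Fin n → K)).card = q ^ (n * N) := by
    rw [Finset.card_univ]
    simp [pow_mul, hq]
  have hle := (Finset.card_le_card hcover).trans (Finset.card_union_le _ _)
  rw [htot] at hle
  have hN2 : N ≤ q ^ (N - 1) := by
    have h1 : N - 1 < 2 ^ (N - 1) := Nat.lt_two_pow_self
    have h2 : 2 ^ (N - 1) ≤ q ^ (N - 1) := Nat.pow_le_pow_left hq2 _
    omega
  have hnN : n * N - 1 = (n - 1) * N + (N - 1) := by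
    obtain ⟨n', rfl⟩ : ∃ n', n = n' + 1 := ⟨n - 1, by omega⟩
    rw [add_mul, Nat.add_sub_cancel]; omega
  have hnN1 : 1 ≤ n * N := Nat.mul_pos hn hN
  have h5 : N * q ^ ((n - 1) * N) ≤ q ^ (n * N - 1) := by
    rw [hnN, pow_add, mul_comm]
    exact Nat.mul_le_mul_left _ hN2
  have h6 : 2 * q ^ (n * N - 1) ≤ q ^ (n * N) := by
    conv_rhs => rw [show n * N = (n * N - 1) + 1 by omega, pow_succ, mul_comm]
    exact Nat.mul_le_mul_right _ hq2
  have hS : q ^ (n * N - 1) ≤ S.card := by omega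
  have : Nonempty (Fin (q ^ (n * N - 1)) ↪ S) := by
    apply Function.Embedding.nonempty_of_card_le
    simpa using hS
  obtain ⟨f⟩ := this
  refine ⟨fun c => (f c).1, fun c c' h => f.injective (Subtype.ext h), fun c => ?_⟩
  exact (Finset.mem_filter.1 (f c).2).2
end Aux3

section Upper

lemma dimH_le_of_cover {X : Type*} [EMetricSpace X] {ι : ℕ → Type*} [∀ b, Fintype (ι b)]
    (s : Set X) (n : ℕ) (r : ℕ → ℝ≥0∞) (hr : Tendsto r atTop (nhds 0)) (t : ∀ b, ι b → Set X)
    (ht : ∀ b i, Metric.ediam (t b i) ≤ r b) (hst : ∀ b, s ⊆ ⋃ i, t b i)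
    (hc : ∀ b, (Fintype.card (ι b) : ℝ≥0∞) * r b ^ n ≤ 1) : dimH s ≤ n := by
  borelize X
  have h1 := Measure.hausdorffMeasure_le_liminf_sum (n : ℝ) s r hr t
    (Filter.Eventually.of_forall ht) (Filter.Eventually.of_forall hst)
  have h2 : liminf (fun b => ∑ i, Metric.ediam (t b i) ^ (n : ℝ)) atTop ≤ 1 := by
    refine (liminf_le_liminf (v := fun _ => (1 : ℝ≥0∞)) (Filter.Eventually.of_forall fun b => ?_)).trans
      (by simp)
    refine le_trans ?_ (hc b)
    calc ∑ i, Metric.ediam (t b i) ^ (n : ℝ) ≤ ∑ i : ι b, r b ^ n := by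
          apply Finset.sum_le_sum
          intro i _
          rw [ENNReal.rpow_natCast]
          exact pow_le_pow_left' (ht b i) _
      _ = _ := by simp
  have h3 : μH[((n : ℝ≥0) : ℝ)] s ≠ ∞ := by
    have : μH[((n : ℝ≥0) : ℝ)] s ≤ 1 := by
      simpa using h1.trans h2
    exact (this.trans_lt ENNReal.one_lt_top).ne
  have := dimH_le_of_hausdorffMeasure_ne_top h3
  simpa using this

variable {K : Type*} [Field K] [Fintype K]

lemma dimH_unit_le (n : ℕ) : dimH {θ : Fin n → FF K | ∀ i, fnorm (θ i) < 1} ≤ n := by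
  set q : ℝ := (Fintype.card K : ℝ) with hq
  have hq1 : 1 < q := q_one_lt
  have hq0 : 0 < q := by linarith
  refine dimH_le_of_cover (ι := fun b => Fin n → Fin b → K) _ n
    (fun b => ENNReal.ofReal ((q⁻¹) ^ b)) ?_
    (fun b c => {θ | ∀ i, (∀ k : ℤ, k ≤ 0 → cf (θ i) k = 0) ∧ ∀ s : Fin b, cf (θ i) (s + 1) = c i s})
    ?_ ?_ ?_
  · have := tendsto_pow_atTop_nhds_zero_of_lt_one (r := q⁻¹) (by positivity) (inv_lt_one_of_one_lt₀ hq1)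
    simpa using ENNReal.tendsto_ofReal this
  · intro b c
    apply Metric.ediam_le
    intro θ hθ θ' hθ'
    rw [edist_dist]
    apply ENNReal.ofReal_le_ofReal
    rw [dist_pi_le_iff (by positivity)]
    intro i
    have h : fnorm (θ i - θ' i) ≤ q ^ (-(b : ℤ)) := by
      apply fnorm_le_of_cf
      intro k hk
      rw [cf_sub]
      rcases le_or_gt k 0 with h0 | h0
      · rw [(hθ i).1 k h0, (hθ' i).1 k h0, sub_self]
      · obtain ⟨s, rfl⟩ : ∃ s : ℕ, k = s + 1 := ⟨(k-1).toNat, by omega⟩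
        have h1 := (hθ i).2 ⟨s, by omega⟩
        have h2 := (hθ' i).2 ⟨s, by omega⟩
        simp only at h1 h2
        rw [h1, h2, sub_self]
    rw [zpow_neg, zpow_natCast, ← inv_pow] at h
    exact h
  · intro b θ hθ
    refine Set.mem_iUnion.2 ⟨fun i s => cf (θ i) (s + 1), fun i => ⟨fun k hk => ?_, fun s => rfl⟩⟩
    exact cf_of_fnorm_lt (k := 0) (by simpa using hθ i) k hk
  · intro b
    have h1 : (Fintype.card (Fin n → Fin b → K) : ℝ≥0∞) = ENNReal.ofReal (q ^ (b * n)) := by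
      rw [hq, ← Nat.cast_pow, ENNReal.ofReal_natCast]
      simp [pow_mul]
    rw [h1, ← ENNReal.ofReal_pow (by positivity), ← ENNReal.ofReal_mul (by positivity)]
    rw [← pow_mul, ← mul_pow, mul_inv_cancel₀ hq0.ne', one_pow]
    simp
end Upper

section Lower
variable {K : Type*} [Field K] [Fintype K]

lemma dist_Th {n N : ℕ} [NeZero N] (β β' : ℕ → Fin N → Fin n → K) (b : ℕ) (h : β b ≠ β' b) :
    (Fintype.card K : ℝ) ^ (-(((b : ℤ) + 1) * N)) ≤ dist (Th β) (Th β') := by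
  obtain ⟨r, hr⟩ := Function.ne_iff.1 h
  obtain ⟨i, hi⟩ := Function.ne_iff.1 hr
  have h1 : cf (Th β i - Th β' i) ((b : ℤ) * N + r + 1) ≠ 0 := by
    rw [cf_sub, cf_Th, cf_Th]
    exact sub_ne_zero.2 hi
  have h2 := le_fnorm_of_cf h1
  have h3 : fnorm (Th β i - Th β' i) ≤ dist (Th β) (Th β') := dist_le_pi_dist (Th β) (Th β') i
  refine le_trans ?_ (h2.trans h3)
  apply zpow_le_zpow_right₀ one_le_q
  have := r.2
  rw [add_mul]
  omega

lemma dimH_lower {X : Type*} [MetricSpace X] {M : ℕ} (hM : 1 < M) (T : (ℕ → Fin M) → X) (s : ℝ≥0)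
    (hs : 0 < s)
    (hT : ∀ d d' b, (∀ k < b, d k = d' k) → d b ≠ d' b → ((M : ℝ) ^ (b + 1))⁻¹ ≤ dist (T d) (T d') ^ (s : ℝ)) :
    (s : ℝ≥0∞) ≤ dimH (Set.range T) := by
  have hM0 : (0 : ℝ) < M := by exact_mod_cast (by omega : 0 < M)
  have : Nonempty (ℕ → Fin M) := ⟨fun _ => ⟨0, by omega⟩⟩
  have hdiff : ∀ d d' : ℕ → Fin M, d ≠ d' → ∃ b, (∀ k < b, d k = d' k) ∧ d b ≠ d' b := by
    intro d d' h
    have hex : ∃ b, d b ≠ d' b := Function.ne_iff.1 h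
    exact ⟨Nat.find hex, fun k hk => not_not.1 (Nat.find_min hex hk), Nat.find_spec hex⟩
  have hinj : Function.Injective T := by
    intro d d' h
    by_contra hne
    obtain ⟨b, h1, h2⟩ := hdiff d d' hne
    have h3 := hT d d' b h1 h2
    rw [h, dist_self, Real.zero_rpow (by exact_mod_cast hs.ne')] at h3
    have : (0 : ℝ) < ((M : ℝ) ^ (b + 1))⁻¹ := by positivity
    linarith
  let g : X → ℝ := fun x => Real.ofDigits (Function.invFun T x)
  have hgT : ∀ d, g (T d) = Real.ofDigits d := fun d => by
    show Real.ofDigits (Function.invFun T (T d)) = _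
    rw [Function.leftInverse_invFun hinj d]
  have hol : HolderOnWith (M : ℝ≥0) s g (Set.range T) := by
    rintro _ ⟨d, rfl⟩ _ ⟨d', rfl⟩
    rw [hgT, hgT, edist_dist, edist_dist, ENNReal.ofReal_rpow_of_nonneg dist_nonneg (NNReal.coe_nonneg s)]
    have : ((M : ℝ≥0) : ℝ≥0∞) = ENNReal.ofReal (M : ℝ) := by simp
    rw [this, ← ENNReal.ofReal_mul hM0.le]
    apply ENNReal.ofReal_le_ofReal
    by_cases hne : d = d'
    · subst hne
      rw [dist_self]
      exact mul_nonneg hM0.le (Real.rpow_nonneg dist_nonneg _)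
    · obtain ⟨b, h1, h2⟩ := hdiff d d' hne
      have h3 := Real.abs_ofDigits_sub_ofDigits_le h1
      rw [Real.dist_eq]
      refine h3.trans ?_
      have h4 := mul_le_mul_of_nonneg_left (hT d d' b h1 h2) hM0.le
      refine le_trans (le_of_eq ?_) h4
      field_simp
      ring
  have h1 := hol.dimH_image_le hs
  have h2 : (1 : ℝ≥0∞) ≤ dimH (g '' Set.range T) := by
    have hsub : Set.Icc (0 : ℝ) 1 ⊆ g '' Set.range T := by
      intro x hx
      obtain ⟨d, -, hd⟩ := Real.ofDigits_SurjOn hM hx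
      exact ⟨T d, ⟨d, rfl⟩, by rw [hgT, hd]⟩
    have h3 : dimH (Set.Icc (0 : ℝ) 1) = 1 := by
      rw [Real.dimH_of_nonempty_interior]
      · simp
      · rw [interior_Icc]; exact ⟨1/2, by norm_num, by norm_num⟩
    rw [← h3]
    exact dimH_mono hsub
  have h3 := h2.trans h1
  rw [ENNReal.le_div_iff_mul_le (Or.inl (by exact_mod_cast hs.ne')) (Or.inl ENNReal.coe_ne_top), one_mul] at h3
  exact h3

lemma dimH_BadAll_ge {m n : ℕ} (hn : 0 < n) (A : Matrix (Fin n) (Fin m) (FF K)) (N : ℕ)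
    (hN : 2 ≤ N) : ENNReal.ofReal ((n : ℝ) - 1 / N) ≤ dimH (BadAll A) := by
  have : NeZero N := ⟨by omega⟩
  have hN0 : (0 : ℝ) < N := by exact_mod_cast (by omega : 0 < N)
  obtain ⟨W, hW⟩ := exists_W A
  have hq2 : 2 ≤ Fintype.card K := Fintype.one_lt_card
  have hnN : 2 ≤ n * N := by nlinarith
  obtain ⟨Φ, hgood, hsep⟩ := tree (M := Fintype.card K ^ (n * N - 1))
    (GoodB (N := N) W) (GoodB_congr W) (exists_inj hn W)
  have hsub : Set.range (fun d => Th (Φ d)) ⊆ BadAll A := by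
    rintro _ ⟨d, rfl⟩
    refine mem_BadAll hn (fun i => fnorm_mkT _ i) hW (L := 2 * N) ?_
    intro e he
    have hdm := Nat.div_add_mod e N
    have hlt := Nat.mod_lt e (show N > 0 by omega)
    have hb : (e / N + 1) * N = N * (e / N) + N := by ring
    obtain ⟨r, hr⟩ := hgood d (e / N + 1) e (by omega) (by omega) he
    refine ⟨_, ?_, ?_, hr⟩
    · have : (((e / N + 1 : ℕ) : ℤ)) * N = N * ((e / N : ℕ) : ℤ) + N := by push_cast; ring
      rw [this]
      zify at hdm hlt
      push_cast
      omega
    · have : (((e / N + 1 : ℕ) : ℤ)) * N = N * ((e / N : ℕ) : ℤ) + N := by push_cast; ring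
      rw [this]
      have := r.2
      zify at hdm hlt
      push_cast
      omega
  have hspos : (0 : ℝ) < (n : ℝ) - 1 / N := by
    have h1 : (1 : ℝ) ≤ n := by exact_mod_cast hn
    have h2 : (1 : ℝ) / N < 1 := by
      rw [div_lt_one hN0]; exact_mod_cast (by omega : 1 < N)
    linarith
  refine le_trans ?_ (dimH_mono hsub)
  refine dimH_lower (Nat.one_lt_pow (by omega) (by omega)) (fun d => Th (Φ d)) (Real.toNNReal ((n : ℝ) - 1 / N))
    (Real.toNNReal_pos.2 hspos) ?_
  intro d d' b h1 h2
  have h3 := dist_Th (Φ d) (Φ d') b (hsep d d' b h1 h2)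
  have hq0 : (0 : ℝ) < (Fintype.card K : ℝ) := by positivity
  rw [Real.coe_toNNReal _ hspos.le]
  refine le_trans (le_of_eq ?_) (Real.rpow_le_rpow (by positivity) h3 hspos.le)
  rw [← Real.rpow_intCast, ← Real.rpow_mul hq0.le]
  push_cast
  rw [← pow_mul, ← Real.rpow_natCast, ← Real.rpow_neg hq0.le]
  congr 1
  push_cast [Nat.cast_sub (show 1 ≤ n * N by omega)]
  field_simp

end Lower

/-- For any non-degenerate matrix `A ∈ M_{n,m}(𝔽_q((z⁻¹)))`, the set
`Bad(A) = ⋃_{ε>0} Bad^ε(A)` has Hausdorff dimension `n`. -/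
theorem dimH_BadAll {K : Type*} [Field K] [Fintype K] {m n : ℕ}
    (hm : 0 < m) (hn : 0 < n)
    (A : Matrix (Fin n) (Fin m) (FF K)) (hA : Nondegenerate A) :
    dimH (BadAll A) = n := by
  apply le_antisymm
  · refine le_trans (dimH_mono ?_) (dimH_unit_le (K := K) n)
    intro θ hθ
    obtain ⟨ε, -, h⟩ := Set.mem_iUnion₂.1 hθ
    exact h.1
  · have h1 : Tendsto (fun N : ℕ => ENNReal.ofReal ((n : ℝ) - 1 / N)) atTop (nhds (n : ℝ≥0∞)) := by
      have h2 : Tendsto (fun N : ℕ => (n : ℝ) - 1 / N) atTop (nhds ((n : ℝ) - 0)) :=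
        tendsto_const_nhds.sub tendsto_one_div_atTop_nhds_zero_nat
      have h3 := ENNReal.tendsto_ofReal h2
      simpa using h3
    refine le_of_tendsto h1 ?_
    filter_upwards [eventually_ge_atTop 2] with N hN
    exact dimH_BadAll_ge hn A N hN
end
end

section
/- Let m, n be positive integers and A ∈ M_{n,m}(𝔽_q((z⁻¹))) be non-degenerate. Then for every integer l ≥ 2, the set Bad^ε(A) with ε = q^{−(2l+2)−m/n} has Hausdorff dimension at least n − 1/l. In particular, there is a continuous function f : ℝ₊ → ℝ₊ with f(0) = 0 such that dim_H Bad^ε(A) ≥ n − f(ε) for every 0 < ε ≤ q^{−m/n−6}. -/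
/-!
Common setup: the field `𝔽_q((z⁻¹))` of formal power series over a finite field `K` of
cardinality `q`, modeled as the field `FF K` of formal Laurent series in `t = z⁻¹`,
together with its non-Archimedean norm, the embedding of the polynomial ring `𝔽_q[z]`,
distances to polynomial (vectors), Diophantine exponents, `Bad` sets, continued fractions
and best approximation sequences.
-/

open scoped Classical ENNReal NNReal
open Filter

noncomputable section

set_option linter.unusedSectionVars false

open FPSDA MeasureTheory

namespace FPSDA
section Aux
variable {K : Type*} [Field K] [Fintype K]

def cf (x : FF K) (i : ℤ) : K := (toL x).coeff i

lemma cf_add (x y : FF K) (i : ℤ) : cf (x + y) i = cf x i + cf y i := rfl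
lemma cf_sub (x y : FF K) (i : ℤ) : cf (x - y) i = cf x i - cf y i := by
  simp [cf, toL_sub]
lemma cf_zero (i : ℤ) : cf (0 : FF K) i = 0 := rfl
lemma cf_sum {ι : Type*} (s : Finset ι) (f : ι → FF K) (i : ℤ) :
    cf (∑ j ∈ s, f j) i = ∑ j ∈ s, cf (f j) i := by
  induction s using Finset.induction_on with
  | empty => simp [cf_zero]
  | insert a s ha ih => rw [Finset.sum_insert ha, Finset.sum_insert ha, cf_add, ih]

lemma cf_ext {x y : FF K} (h : ∀ i, cf x i = cf y i) : x = y :=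
  HahnSeries.ext (funext h)

lemma one_lt_q : (1 : ℝ) < (Fintype.card K : ℝ) := by
  exact_mod_cast Fintype.one_lt_card

lemma fnorm_le_iff (x : FF K) (N : ℤ) :
    fnorm x ≤ (Fintype.card K : ℝ) ^ (-N) ↔ ∀ i < N, cf x i = 0 := by
  have hq := one_lt_q (K := K)
  unfold fnorm
  split_ifs with h
  · constructor
    · intro _ i _
      unfold cf
      rw [h]; rfl
    · intro _
      positivity
  · rw [zpow_le_zpow_iff_right₀ hq, neg_le_neg_iff, HahnSeries.le_order_iff_forall h]
    rfl

lemma polyF_add (P Q : Polynomial K) : polyF (P + Q) = polyF P + polyF Q :=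
  map_add (Polynomial.aeval (HahnSeries.single (-1 : ℤ) (1 : K))) P Q

lemma polyF_zero : polyF (0 : Polynomial K) = 0 :=
  map_zero (Polynomial.aeval (HahnSeries.single (-1 : ℤ) (1 : K)))

lemma polyF_one : polyF (1 : Polynomial K) = 1 :=
  map_one (Polynomial.aeval (HahnSeries.single (-1 : ℤ) (1 : K)))

lemma polyF_sum {ι : Type*} (s : Finset ι) (f : ι → Polynomial K) :
    polyF (∑ j ∈ s, f j) = ∑ j ∈ s, polyF (f j) :=
  map_sum (Polynomial.aeval (HahnSeries.single (-1 : ℤ) (1 : K))) f s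

lemma polyF_mul (P Q : Polynomial K) : polyF (P * Q) = polyF P * polyF Q :=
  map_mul (Polynomial.aeval (HahnSeries.single (-1 : ℤ) (1 : K))) P Q

lemma algMap_eq (c : K) : algebraMap K (HahnSeries ℤ K) c = HahnSeries.C c := by
  rw [HahnSeries.algebraMap_apply']
  simp

lemma polyF_monomial (a : ℕ) (c : K) :
    toL (polyF (Polynomial.monomial a c)) = HahnSeries.single (-(a : ℤ)) c := by
  unfold toL polyF
  rw [Polynomial.aeval_monomial, HahnSeries.single_pow, algMap_eq, HahnSeries.C_apply,
    HahnSeries.single_mul_single]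
  simp

lemma cf_monomial_mul (a : ℕ) (c : K) (x : FF K) (i : ℤ) :
    cf (polyF (Polynomial.monomial a c) * x) i = c * cf x (i + a) := by
  have : toL (polyF (Polynomial.monomial a c) * x)
      = HahnSeries.single (-(a : ℤ)) c * toL x := by
    rw [← polyF_monomial]; rfl
  unfold cf
  rw [this, HahnSeries.coeff_single_mul, sub_neg_eq_add]

lemma cf_poly_mul (P : Polynomial K) (D : ℕ) (hP : ∀ a, D ≤ a → P.coeff a = 0) (x : FF K)
    (i : ℤ) : cf (polyF P * x) i = ∑ a ∈ Finset.range D, P.coeff a * cf x (i + a) := by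
  have h : P = ∑ a ∈ Finset.range D, Polynomial.monomial a (P.coeff a) := by
    ext b
    rw [Polynomial.finsetSum_coeff]
    simp only [Polynomial.coeff_monomial]
    rw [Finset.sum_ite_eq' (Finset.range D) b]
    split_ifs with hb
    · rfl
    · exact hP b (by simpa using hb)
  conv_lhs => rw [h]
  rw [polyF_sum, Finset.sum_mul, cf_sum]
  simp only [cf_monomial_mul]

lemma cf_one (i : ℤ) : cf (1 : FF K) i = if i = 0 then 1 else 0 := by
  have : toL (1 : FF K) = 1 := rfl
  unfold cf
  rw [this, HahnSeries.coeff_one]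
  split_ifs <;> rfl

lemma cf_poly (P : Polynomial K) (i : ℤ) :
    cf (polyF P) i = if i ≤ 0 then P.coeff (-i).toNat else 0 := by
  have h := cf_poly_mul P (P.natDegree + 1)
    (fun a ha => Polynomial.coeff_eq_zero_of_natDegree_lt (by omega)) 1 i
  rw [mul_one] at h
  rw [h]
  simp only [cf_one]
  split_ifs with hi
  · by_cases hd : (-i).toNat ≤ P.natDegree
    · rw [Finset.sum_eq_single (-i).toNat]
      · rw [if_pos (by omega), mul_one]
      · intro b _ hb
        rw [if_neg (by omega), mul_zero]
      · intro hb
        simp at hb; omega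
    · rw [Polynomial.coeff_eq_zero_of_natDegree_lt (by omega)]
      apply Finset.sum_eq_zero
      intro b hb
      simp at hb
      rw [if_neg (by omega), mul_zero]
  · apply Finset.sum_eq_zero
    intro b hb
    rw [if_neg (by omega), mul_zero]

lemma exists_poly (x : FF K) (h : ∀ i : ℤ, 1 ≤ i → cf x i = 0) : ∃ P : Polynomial K, x = polyF P := by
  refine ⟨intPoly x, cf_ext fun i => ?_⟩
  rw [cf_poly]
  split_ifs with hi
  · unfold intPoly
    rw [Polynomial.finsetSum_coeff]
    simp only [Polynomial.coeff_monomial]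
    rw [Finset.sum_ite_eq' _ (-i).toNat]
    split_ifs with hb
    · unfold cf; congr 1; omega
    · simp at hb
      exact HahnSeries.coeff_eq_zero_of_lt_order (by omega)
  · exact h i (by omega)

variable {m n : ℕ}

def DegLt (y : Fin n → Polynomial K) (D : ℕ) : Prop := ∀ j a, D ≤ a → (y j).coeff a = 0

def Van (A : Matrix (Fin n) (Fin m) (FF K)) (N : ℕ) (y : Fin n → Polynomial K) : Prop :=
  ∀ k : Fin m, ∀ i : ℕ, 1 ≤ i → i ≤ N →
    cf (A.transpose.mulVec (fun j => polyF (y j)) k) i = 0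

lemma cf_mulVec (A : Matrix (Fin n) (Fin m) (FF K)) (y : Fin n → Polynomial K) (D : ℕ)
    (hy : DegLt y D) (k : Fin m) (i : ℤ) :
    cf (A.transpose.mulVec (fun j => polyF (y j)) k) i =
      ∑ j, ∑ a ∈ Finset.range D, (y j).coeff a * cf (A j k) (i + a) := by
  simp only [Matrix.mulVec, dotProduct, Matrix.transpose_apply]
  rw [cf_sum]
  refine Finset.sum_congr rfl fun j _ => ?_
  rw [mul_comm, cf_poly_mul _ D (hy j)]

lemma dirichlet (A : Matrix (Fin n) (Fin m) (FF K)) (D N : ℕ) (h : m * N < n * D) :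
    ∃ y : Fin n → Polynomial K, y ≠ 0 ∧ DegLt y D ∧ Van A N y := by
  let B : Matrix (Fin m × Fin N) (Fin n × Fin D) K := fun s p =>
    cf (A p.1 s.1) (((s.2 : ℕ) + 1 : ℕ) + ((p.2 : ℕ) : ℤ))
  have hker : LinearMap.ker (Matrix.mulVecLin B) ≠ ⊥ := by
    apply LinearMap.ker_ne_bot_of_finrank_lt
    simpa using h
  obtain ⟨c, hc, hc0⟩ := (Submodule.ne_bot_iff _).1 hker
  rw [LinearMap.mem_ker, Matrix.mulVecLin_apply] at hc
  have hcoef : ∀ j a, (∑ b : Fin D, Polynomial.monomial (b : ℕ) (c (j, b)) : Polynomial K).coeff a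
      = if h : a < D then c (j, ⟨a, h⟩) else 0 := by
    intro j a
    rw [Polynomial.finsetSum_coeff]
    simp only [Polynomial.coeff_monomial]
    split_ifs with ha
    · rw [Finset.sum_eq_single ⟨a, ha⟩]
      · simp
      · intro b _ hb
        rw [if_neg]
        intro hba
        exact hb (Fin.ext hba)
      · simp
    · apply Finset.sum_eq_zero
      intro b _
      rw [if_neg]
      have := b.2
      omega
  have hdeg : DegLt (fun j => ∑ b : Fin D, Polynomial.monomial (b : ℕ) (c (j, b))) D := by
    intro j a ha
    rw [hcoef, dif_neg (by omega)]
  refine ⟨fun j => ∑ b : Fin D, Polynomial.monomial (b : ℕ) (c (j, b)), ?_, hdeg, ?_⟩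
  · intro h0
    apply hc0
    ext ⟨j, b⟩
    have := hcoef j b
    rw [congrFun h0 j] at this
    simpa using this.symm
  · intro k i hi1 hi2
    rw [cf_mulVec A _ D hdeg]
    have := congrFun hc (k, ⟨i - 1, by omega⟩)
    simp only [Matrix.mulVec, dotProduct, Pi.zero_apply, B] at this
    rw [Fintype.sum_prod_type] at this
    rw [← this]
    refine Finset.sum_congr rfl fun j _ => ?_
    rw [Finset.sum_range]
    refine Finset.sum_congr rfl fun b _ => ?_
    rw [hcoef, dif_pos b.2, mul_comm]
    congr 2
    push_cast [Nat.sub_add_cancel hi1]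
    rfl

lemma exists_not_van (A : Matrix (Fin n) (Fin m) (FF K)) (hA : Nondegenerate A)
    (y : Fin n → Polynomial K) (hy : y ≠ 0) : ∃ N, ¬ Van A N y := by
  by_contra hcon
  push Not at hcon
  apply hy
  apply hA
  have : ∀ k, ∃ P : Polynomial K, A.transpose.mulVec (fun j => polyF (y j)) k = polyF P := by
    intro k
    apply exists_poly
    intro i hi
    have := hcon i.toNat k i.toNat (by omega) le_rfl
    rwa [Int.toNat_of_nonneg (by omega)] at this
  choose v hv using this
  exact ⟨v, funext hv⟩

lemma van_mono {A : Matrix (Fin n) (Fin m) (FF K)} {N N' : ℕ} (h : N ≤ N')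
    {y : Fin n → Polynomial K} (hy : Van A N' y) : Van A N y :=
  fun k i h1 h2 => hy k i h1 (h2.trans h)

lemma finite_degLt (D : ℕ) : {y : Fin n → Polynomial K | DegLt y D}.Finite := by
  apply Set.Finite.of_injOn (f := fun y => fun (j : Fin n) (a : Fin D) => (y j).coeff a)
    (t := Set.univ) (fun _ _ => Set.mem_univ _) _ Set.finite_univ
  intro y hy y' hy' h
  ext j a
  by_cases ha : a < D
  · exact congrFun (congrFun h j) ⟨a, ha⟩
  · rw [hy j a (by omega), hy' j a (by omega)]

/-- `y` is an optimal vector among those of degree `< D`. -/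
def Opt (A : Matrix (Fin n) (Fin m) (FF K)) (D : ℕ) (y : Fin n → Polynomial K) : Prop :=
  ∀ y' : Fin n → Polynomial K, y' ≠ 0 → DegLt y' D → ∀ N, Van A N y' → Van A N y

lemma exists_opt (hn : 0 < n) (A : Matrix (Fin n) (Fin m) (FF K)) (hA : Nondegenerate A) (D : ℕ)
    (hD : 0 < D) : ∃ y : Fin n → Polynomial K, y ≠ 0 ∧ DegLt y D ∧ Opt A D y := by
  let S : Set (Fin n → Polynomial K) := {y | DegLt y D ∧ y ≠ 0}
  have hS : S.Finite := (finite_degLt D).subset fun y hy => hy.1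
  have hSne : S.Nonempty := by
    obtain ⟨y, h1, h2, _⟩ := dirichlet A D 0 (by simpa using ⟨hn, hD⟩)
    exact ⟨y, h2, h1⟩
  let v : (Fin n → Polynomial K) → ℕ := fun y => sInf {N | ¬ Van A N y}
  obtain ⟨y, hyS, hy⟩ := Set.exists_max_image S v hS hSne
  refine ⟨y, hyS.2, hyS.1, ?_⟩
  intro y' hy' hd N hN
  by_contra hcon
  have h1 : v y ≤ N := Nat.sInf_le hcon
  have h2 : v y' ≤ v y := hy y' ⟨hd, hy'⟩
  have h3 : ¬ Van A (v y') y' := Nat.sInf_mem (exists_not_van A hA y' hy')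
  exact h3 (van_mono (h2.trans h1) hN)

lemma exists_seq (hn : 0 < n) (A : Matrix (Fin n) (Fin m) (FF K)) (hA : Nondegenerate A) (l : ℕ)
    (hl : 0 < l) : ∃ (I : Set ℕ) (Y : ℕ → Fin n → Polynomial K),
      (∀ i ∈ I, DegLt (Y i) ((i + 1) * l) ∧ ¬ DegLt (Y i) (i * l)) ∧
      ∀ k, ∃ i ∈ I, i ≤ k ∧ Opt A ((k + 1) * l) (Y i) := by
  let C : ℕ → (Fin n → Polynomial K) → Prop := fun i y =>
    y ≠ 0 ∧ DegLt y ((i + 1) * l) ∧ ¬ DegLt y (i * l) ∧ Opt A ((i + 1) * l) y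
  let Y : ℕ → Fin n → Polynomial K := fun i => if h : ∃ y, C i y then h.choose else 0
  have hY : ∀ i, (∃ y, C i y) → C i (Y i) := by
    intro i h
    simp only [Y, dif_pos h]
    exact h.choose_spec
  refine ⟨{i | ∃ y, C i y}, Y, fun i hi => ⟨(hY i hi).2.1, (hY i hi).2.2.1⟩, fun k => ?_⟩
  have hex : ∃ i, ∃ y : Fin n → Polynomial K, y ≠ 0 ∧ DegLt y ((i + 1) * l) ∧
      Opt A ((k + 1) * l) y := ⟨k, exists_opt hn A hA _ (by positivity)⟩
  obtain ⟨y, hy0, hyd, hyo⟩ := Nat.find_spec hex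
  have hik : Nat.find hex ≤ k := Nat.find_min' hex (exists_opt hn A hA _ (by positivity))
  set i := Nat.find hex with hi
  have hsub : ∀ y' : Fin n → Polynomial K, DegLt y' ((i + 1) * l) → DegLt y' ((k + 1) * l) := by
    intro y' h j a ha
    refine h j a (le_trans ?_ ha)
    gcongr
  have hCi : C i y := by
    refine ⟨hy0, hyd, ?_, fun y' h0 hd => hyo y' h0 (hsub y' hd)⟩
    intro hlow
    rcases Nat.eq_zero_or_pos i with h0 | hpos
    · apply hy0
      ext j a
      rw [hlow j a (by rw [h0]; omega)]
      simp
    · refine Nat.find_min hex (m := i - 1) (by omega) ⟨y, hy0, ?_, hyo⟩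
      rwa [Nat.sub_add_cancel hpos]
  refine ⟨i, ⟨y, hCi⟩, hik, ?_⟩
  have hYi := hY i ⟨y, hCi⟩
  intro y' h0 hd N hN
  exact hYi.2.2.2 y hy0 hyd N (hyo y' h0 hd N hN)

end Aux
end FPSDA

namespace FPSDA
section Aux
variable {K : Type*} [Field K] [Fintype K] {m n : ℕ}

lemma fnorm_lt_iff (x : FF K) (N : ℤ) :
    fnorm x < (Fintype.card K : ℝ) ^ (-N) ↔ ∀ i ≤ N, cf x i = 0 := by
  have hq := one_lt_q (K := K)
  have h1 : fnorm x < (Fintype.card K : ℝ) ^ (-N) ↔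
      fnorm x ≤ (Fintype.card K : ℝ) ^ (-(N + 1)) := by
    unfold fnorm
    split_ifs with h
    · constructor
      · intro _; positivity
      · intro _; positivity
    · rw [zpow_le_zpow_iff_right₀ hq, zpow_lt_zpow_iff_right₀ hq]
      omega
  rw [h1, fnorm_le_iff]
  constructor
  · intro h i hi
    exact h i (by omega)
  · intro h i hi
    exact h i (by omega)

lemma le_vnorm {ι : Type*} [Fintype ι] (v : ι → FF K) (i : ι) : fnorm (v i) ≤ vnorm v :=
  le_ciSup (f := fun i => fnorm (v i)) (Set.finite_range _).bddAbove i

lemma vdist_ge (A : Matrix (Fin n) (Fin m) (FF K)) (θ : Fin n → FF K)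
    (y : Fin n → Polynomial K) (x : Fin m → Polynomial K) (D r : ℕ)
    (hy : DegLt y D) (hx : DegLt x r) (hv : Van A r y)
    (hθ : cf (∑ j, polyF (y j) * θ j) 1 ≠ 0) :
    (Fintype.card K : ℝ) ^ (-(D : ℤ)) ≤ vdist (A.mulVec (fun j => polyF (x j)) - θ) := by
  refine le_ciInf fun p => ?_
  by_contra hcon
  push Not at hcon
  set w : Fin n → FF K := fun i => (A.mulVec (fun j => polyF (x j)) - θ) i - polyF (p i) with hw
  have hwj : ∀ j, ∀ i ≤ (D : ℤ), cf (w j) i = 0 := fun j =>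
    (fnorm_lt_iff _ _).1 ((le_vnorm w j).trans_lt hcon)
  have h1 : cf (∑ j, polyF (y j) * w j) 1 = 0 := by
    rw [cf_sum]
    refine Finset.sum_eq_zero fun j _ => ?_
    rw [cf_poly_mul _ D (hy j)]
    refine Finset.sum_eq_zero fun a ha => ?_
    rw [hwj j _ (by simp at ha; omega), mul_zero]
  have h2 : cf (∑ j, polyF (y j) * A.mulVec (fun j => polyF (x j)) j) 1 = 0 := by
    have : ∑ j, polyF (y j) * A.mulVec (fun j => polyF (x j)) j =
        ∑ k, polyF (x k) * A.transpose.mulVec (fun j => polyF (y j)) k := by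
      simp only [Matrix.mulVec, dotProduct, Matrix.transpose_apply, Finset.mul_sum]
      rw [Finset.sum_comm]
      refine Finset.sum_congr rfl fun _ _ => Finset.sum_congr rfl fun _ _ => ?_
      ring
    rw [this, cf_sum]
    refine Finset.sum_eq_zero fun k _ => ?_
    rw [cf_poly_mul _ r (hx k)]
    refine Finset.sum_eq_zero fun a ha => ?_
    have := hv k (1 + a) (by omega) (by simp at ha; omega)
    push_cast at this
    rw [this, mul_zero]
  have h3 : cf (∑ j, polyF (y j) * polyF (p j)) 1 = 0 := by
    simp only [← polyF_mul, ← polyF_sum]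
    rw [cf_poly, if_neg (by norm_num)]
  apply hθ
  have h4 : ∑ j, polyF (y j) * θ j = ∑ j, polyF (y j) * A.mulVec (fun j => polyF (x j)) j
      - ∑ j, polyF (y j) * polyF (p j) - ∑ j, polyF (y j) * w j := by
    rw [← Finset.sum_sub_distrib, ← Finset.sum_sub_distrib]
    refine Finset.sum_congr rfl fun j _ => ?_
    simp only [hw, Pi.sub_apply]
    ring
  rw [h4, cf_sub, cf_sub, h1, h2, h3]
  simp

lemma pnorm_eq (hm : 0 < m) (x : Fin m → Polynomial K) (hx : 0 < pnorm x) :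
    ∃ r : ℕ, pnorm x = (Fintype.card K : ℝ) ^ (r : ℤ) ∧ DegLt x (r + 1) := by
  have : Nonempty (Fin m) := ⟨⟨0, hm⟩⟩
  obtain ⟨k, hk⟩ := exists_eq_ciSup_of_finite (f := fun j => fnorm (polyF (x j)))
  change fnorm (polyF (x k)) = pnorm x at hk
  have hle : ∀ j, fnorm (polyF (x j)) ≤ pnorm x := fun j => le_vnorm (fun i => polyF (x i)) j
  have hne : toL (polyF (x k)) ≠ 0 := by
    intro h
    have : fnorm (polyF (x k)) = 0 := by unfold fnorm; rw [if_pos h]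
    rw [hk] at this
    exact hx.ne' this
  have hval : pnorm x = (Fintype.card K : ℝ) ^ (-(toL (polyF (x k))).order) := by
    rw [← hk]
    conv_lhs => unfold fnorm
    rw [if_neg hne]
  set s := (toL (polyF (x k))).order with hs
  have hs0 : s ≤ 0 := by
    by_contra hcon
    have h1 : cf (polyF (x k)) s ≠ 0 := by
      unfold cf
      rw [hs]
      simpa [HahnSeries.coeff_order_eq_zero] using hne
    rw [cf_poly, if_neg hcon] at h1
    exact h1 rfl
  refine ⟨(-s).toNat, ?_, ?_⟩
  · rw [hval]; congr 1; omega
  · intro j a ha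
    have h1 := hle j
    rw [hval, fnorm_le_iff] at h1
    have h2 := h1 (-a) (by omega)
    rw [cf_poly, if_pos (by omega)] at h2
    simpa using h2

lemma mem_bad (hm : 0 < m) (hn : 0 < n) (A : Matrix (Fin n) (Fin m) (FF K)) (l : ℕ) (hl : 0 < l)
    (I : Set ℕ) (Y : ℕ → Fin n → Polynomial K)
    (h1 : ∀ i ∈ I, DegLt (Y i) ((i + 1) * l))
    (h2 : ∀ k, ∃ i ∈ I, i ≤ k ∧ Opt A ((k + 1) * l) (Y i))
    (θ : Fin n → FF K) (hθ1 : ∀ j, fnorm (θ j) < 1)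
    (hθ : ∀ i ∈ I, cf (∑ j, polyF (Y i j) * θ j) 1 ≠ 0) :
    θ ∈ Bad A ((Fintype.card K : ℝ) ^ (-(l : ℝ) - (m : ℝ) / (n : ℝ))) := by
  have hq := one_lt_q (K := K)
  refine ⟨hθ1, ?_⟩
  unfold badLiminf
  refine Filter.le_liminf_of_le (h := ?_)
  filter_upwards [(eventually_gt_atTop (0 : ℝ)).comap (fun x : Fin m → Polynomial K => pnorm x)]
    with x hx
  apply ENNReal.ofReal_le_ofReal
  obtain ⟨r, hr, hd⟩ := pnorm_eq hm x hx
  have hnl : 0 < n * l := by positivity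
  set k := m * (r + 1) / (n * l) with hk
  have hk1 : k * (n * l) ≤ m * (r + 1) := Nat.div_mul_le_self _ _
  have hk2 : m * (r + 1) < n * ((k + 1) * l) := by
    have := Nat.lt_div_mul_add (a := m * (r + 1)) hnl
    rw [← hk] at this
    nlinarith
  obtain ⟨y, hy0, hyd, hyv⟩ := dirichlet A _ _ hk2
  obtain ⟨i, hi, hik, hopt⟩ := h2 k
  have hYv := hopt y hy0 hyd _ hyv
  have hYd : DegLt (Y i) ((k + 1) * l) := fun j a ha =>
    h1 i hi j a (le_trans (by gcongr) ha)
  have hge := vdist_ge A θ (Y i) x _ _ hYd hd hYv (hθ i hi)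
  have hq0 : (0 : ℝ) < Fintype.card K := by linarith
  have hn' : (0 : ℝ) < n := by exact_mod_cast hn
  calc (Fintype.card K : ℝ) ^ (-(l : ℝ) - (m : ℝ) / (n : ℝ))
      ≤ (Fintype.card K : ℝ) ^ ((r : ℝ) * ((m : ℝ) / n) + (-(((k + 1) * l : ℕ) : ℝ))) := by
        apply Real.rpow_le_rpow_of_exponent_le hq.le
        have h : (k : ℝ) * (n * l) ≤ m * (r + 1) := by exact_mod_cast hk1
        have h' : (k : ℝ) * l ≤ m / n * (r + 1) := by
          rw [div_mul_eq_mul_div, le_div_iff₀ hn']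
          linarith
        push_cast
        linarith
    _ = (pnorm x) ^ ((m : ℝ) / (n : ℝ)) * (Fintype.card K : ℝ) ^ (-(((k + 1) * l : ℕ) : ℤ)) := by
        rw [Real.rpow_add hq0, Real.rpow_mul hq0.le, hr]
        congr 1
        · simp
        · rw [← Real.rpow_intCast]; push_cast; rfl
    _ ≤ _ := by
        apply mul_le_mul_of_nonneg_left hge
        exact Real.rpow_nonneg hx.le _

end Aux
end FPSDA

namespace FPSDA
section Aux
variable {K : Type*} [Field K] [Fintype K] {m n : ℕ}

lemma sum_range_mul_fin (D : ℕ) (f : ℕ → K) :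
    ∑ p ∈ Finset.range (n * D), f p = ∑ j : Fin n, ∑ a ∈ Finset.range D, f (n * a + j) := by
  rw [Finset.sum_comm]
  induction D with
  | zero => simp
  | succ D ih =>
    rw [Nat.mul_succ, Finset.sum_range_add, Finset.sum_range_succ, ih, Finset.sum_range (n := n)]

/-- Strong recursion on digits. -/
def recDig (G : ℕ → (ℕ → K) → K) (p : ℕ) : K :=
  G p (fun s => if _h : s < p then recDig G s else 0)
termination_by p

lemma exists_digits (I : Set ℕ) (lam : ℕ → ℕ → K) (Pm : ℕ → ℕ) (w : ℕ) (e : ℕ → K)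
    (h1 : ∀ i ∈ I, lam i (Pm i) ≠ 0) (h2 : ∀ i ∈ I, Pm i / w = i) :
    ∃ ω : ℕ → K, (∀ p, ¬ (p / w ∈ I ∧ p = Pm (p / w)) → ω p = e p) ∧
      ∀ i ∈ I, ∑ p ∈ Finset.range (Pm i + 1), lam i p * ω p = 1 := by
  let G : ℕ → (ℕ → K) → K := fun p g =>
    if p / w ∈ I ∧ p = Pm (p / w) then
      (lam (p / w) p)⁻¹ * (1 - ∑ s ∈ Finset.range p, lam (p / w) s * g s) else e p
  refine ⟨recDig G, ?_, ?_⟩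
  · intro p hp
    rw [recDig]
    simp only [G, if_neg hp]
  · intro i hi
    have hT : Pm i / w ∈ I ∧ Pm i = Pm (Pm i / w) := by rw [h2 i hi]; exact ⟨hi, rfl⟩
    have hval : recDig G (Pm i) = (lam i (Pm i))⁻¹ *
        (1 - ∑ s ∈ Finset.range (Pm i), lam i s * recDig G s) := by
      rw [recDig]
      simp only [G, if_pos hT, h2 i hi]
      congr 2
      refine Finset.sum_congr rfl fun s hs => ?_
      rw [dif_pos (Finset.mem_range.1 hs)]
    rw [Finset.sum_range_succ, hval, mul_inv_cancel_left₀ (h1 i hi)]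
    ring

/-- The vector with prescribed digits. -/
def vec (ω : ℕ → K) (j : Fin n) : FF K :=
  (HahnSeries.ofSuppBddBelow (fun i : ℤ => if 1 ≤ i then ω (n * (i - 1).toNat + j) else 0)
    ⟨1, by
      intro i hi
      by_contra h
      simp [h] at hi⟩ : LaurentSeries K)

lemma cf_vec (ω : ℕ → K) (j : Fin n) (i : ℤ) :
    cf (vec ω j) i = if 1 ≤ i then ω (n * (i - 1).toNat + j) else 0 := rfl

lemma dim_lower (hm : 0 < m) (hn : 0 < n) (A : Matrix (Fin n) (Fin m) (FF K))
    (hA : Nondegenerate A) (l : ℕ) (hl : 2 ≤ l) :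
    ENNReal.ofReal ((n : ℝ) - 1 / (l : ℝ)) ≤
      dimH (Bad A ((Fintype.card K : ℝ) ^ (-(l : ℝ) - (m : ℝ) / (n : ℝ)))) := by
  have hq := one_lt_q (K := K)
  have hq0 : (0 : ℝ) < Fintype.card K := by linarith
  have hl0 : 0 < l := by omega
  obtain ⟨I, Y, hY, hopt⟩ := exists_seq hn A hA l hl0
  let lam : ℕ → ℕ → K := fun i p => (Y i ⟨p % n, Nat.mod_lt _ hn⟩).coeff (p / n)
  have hlam : ∀ i a (j : Fin n), lam i (n * a + j) = (Y i j).coeff a := by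
    intro i a j
    have e1 : (n * a + j) / n = a := by
      rw [Nat.mul_add_div hn, Nat.div_eq_of_lt j.2, add_zero]
    have e2 : (n * a + j) % n = j := by
      rw [Nat.mul_add_mod, Nat.mod_eq_of_lt j.2]
    simp only [lam, e1, e2]
  have hP : ∀ i, ∃ P, i ∈ I → lam i P ≠ 0 ∧ (∀ p, P < p → lam i p = 0) ∧ P / (n * l) = i := by
    intro i
    by_cases hi : i ∈ I
    swap
    · exact ⟨0, fun h => absurd h hi⟩
    obtain ⟨hd, hnd⟩ := hY i hi
    have hz : ∀ p, n * ((i + 1) * l) ≤ p → lam i p = 0 := by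
      intro p hp
      apply hd
      rw [Nat.le_div_iff_mul_le hn]
      linarith
    unfold DegLt at hnd
    push Not at hnd
    obtain ⟨j, a, ha, hja⟩ := hnd
    rw [← hlam] at hja
    have hb : n * a + j ≤ n * ((i + 1) * l) := by
      by_contra hc
      exact hja (hz _ (by omega))
    let P := Nat.findGreatest (fun p => lam i p ≠ 0) (n * ((i + 1) * l))
    have hP1 : lam i P ≠ 0 := Nat.findGreatest_spec (P := fun p => lam i p ≠ 0) hb hja
    have hP2 : n * a + j ≤ P := Nat.le_findGreatest hb hja
    have hP3 : P < n * ((i + 1) * l) := by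
      by_contra hc
      exact hP1 (hz _ (by omega))
    refine ⟨P, fun _ => ⟨hP1, ?_, ?_⟩⟩
    · intro p hp
      by_cases hpb : p ≤ n * ((i + 1) * l)
      · by_contra hc
        exact absurd (Nat.le_findGreatest (P := fun p => lam i p ≠ 0) hpb hc) (by omega)
      · exact hz p (by omega)
    · apply Nat.div_eq_of_lt_le
      · have : n * (i * l) ≤ n * a := Nat.mul_le_mul_left _ ha
        linarith
      · linarith
  choose Pm hPm using hP
  let T : ℕ → Prop := fun p => p / (n * l) ∈ I ∧ p = Pm (p / (n * l))
  let F : ℕ → Prop := fun p => ¬ T p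
  have hnl : 0 < n * l := by positivity
  have hFinf : (Set.ofPred F).Infinite := by
    apply Set.infinite_of_forall_exists_gt
    intro B0
    obtain ⟨B, hBB⟩ : ∃ B, B = B0 + 1 := ⟨_, rfl⟩
    have hnl2 : 2 ≤ n * l := by nlinarith
    have e1 : (n * l * B) / (n * l) = B := Nat.mul_div_cancel_left _ hnl
    have e2 : (n * l * B + 1) / (n * l) = B := by
      rw [Nat.mul_add_div hnl, Nat.div_eq_of_lt (by omega), add_zero]
    have hB : B ≤ n * l * B := Nat.le_mul_of_pos_left _ hnl
    by_cases hT : T (n * l * B)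
    · refine ⟨n * l * B + 1, ?_, by omega⟩
      intro hT'
      have h1 := hT.2
      have h2 := hT'.2
      rw [e1] at h1
      rw [e2] at h2
      omega
    · exact ⟨n * l * B, hT, by omega⟩
  have hcount : ∀ N : ℕ, ((n : ℝ) - 1 / l) * N - 1 ≤ Nat.count F (n * N) := by
    intro N
    have h1 : Nat.count T (n * N) ≤ N / l + 1 := by
      rw [Nat.count_eq_card_filter_range]
      rw [← Finset.card_range (N / l + 1)]
      apply Finset.card_le_card_of_injOn (fun p => p / (n * l))
      · intro p hp
        simp only [Finset.coe_filter, Finset.mem_range, Set.mem_ofPred_eq] at hp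
        simp only [Finset.coe_range, Set.mem_Iio]
        have : p / (n * l) ≤ N / l := by
          rw [← Nat.div_div_eq_div_mul]
          apply Nat.div_le_div_right
          apply Nat.div_le_of_le_mul
          exact hp.1.le
        omega
      · intro p hp p' hp' hpp
        simp only [Finset.coe_filter, Finset.mem_range, Set.mem_ofPred_eq] at hp hp'
        have hpp' : p / (n * l) = p' / (n * l) := hpp
        rw [hp.2.2, hp'.2.2, hpp']
    have h2 : Nat.count T (n * N) + Nat.count F (n * N) = n * N := by
      rw [Nat.count_eq_card_filter_range, Nat.count_eq_card_filter_range]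
      have := Finset.card_filter_add_card_filter_not (s := Finset.range (n * N)) T
      rw [Finset.card_range] at this
      exact this
    have h3 : ((N / l : ℕ) : ℝ) ≤ (N : ℝ) / l := Nat.cast_div_le
    have h4 : (Nat.count T (n * N) : ℝ) ≤ ((N / l : ℕ) : ℝ) + 1 := by exact_mod_cast h1
    have h5 : (Nat.count T (n * N) : ℝ) + Nat.count F (n * N) = n * N := by exact_mod_cast h2
    have h6 : ((n : ℝ) - 1 / l) * N = n * N - N / l := by ring
    rw [h6]
    linarith
  let φ : K ≃ Fin (Fintype.card K) := Fintype.equivFin K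
  let f : (Fin n → FF K) → ℝ := fun θ => Real.ofDigits (fun k =>
    φ (cf (θ ⟨Nat.nth F k % n, Nat.mod_lt _ hn⟩) ((Nat.nth F k / n : ℕ) + 1)))
  let G : Set (Fin n → FF K) := {θ | (∀ j, fnorm (θ j) < 1) ∧
    ∀ i ∈ I, cf (∑ j, polyF (Y i j) * θ j) 1 ≠ 0}
  have hG : G ⊆ Bad A ((Fintype.card K : ℝ) ^ (-(l : ℝ) - (m : ℝ) / (n : ℝ))) := by
    intro θ hθ
    exact mem_bad hm hn A l hl0 I Y (fun i hi => (hY i hi).1) hopt θ hθ.1 hθ.2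
  have hsurj : Set.Ioo (0 : ℝ) 1 ⊆ f '' G := by
    intro u hu
    obtain ⟨d, -, hd⟩ := Real.ofDigits_SurjOn (b := Fintype.card K) Fintype.one_lt_card
      (Set.Ioo_subset_Icc_self hu)
    obtain ⟨ω, hω1, hω2⟩ := exists_digits I lam Pm (n * l) (fun p => φ.symm (d (Nat.count F p)))
      (fun i hi => (hPm i hi).1) (fun i hi => (hPm i hi).2.2)
    refine ⟨vec ω, ⟨?_, ?_⟩, ?_⟩
    · intro j
      have := (fnorm_lt_iff (vec ω j) 0).2 (fun i hi => by rw [cf_vec, if_neg (by omega)])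
      simpa using this
    · intro i hi
      have hs : cf (∑ j, polyF (Y i j) * vec ω j) 1 =
          ∑ p ∈ Finset.range (n * ((i + 1) * l)), lam i p * ω p := by
        rw [cf_sum, sum_range_mul_fin]
        refine Finset.sum_congr rfl fun j _ => ?_
        rw [cf_poly_mul _ _ ((hY i hi).1 j)]
        refine Finset.sum_congr rfl fun a _ => ?_
        rw [hlam, cf_vec, if_pos (by omega)]
        congr 3
        simp
      have hs2 : ∑ p ∈ Finset.range (n * ((i + 1) * l)), lam i p * ω p =
          ∑ p ∈ Finset.range (Pm i + 1), lam i p * ω p := by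
        symm
        apply Finset.sum_subset
        · intro p hp
          have h1 := (hPm i hi).2.2
          have h2 := Nat.lt_div_mul_add (a := Pm i) hnl
          rw [h1] at h2
          simp only [Finset.mem_range] at hp ⊢
          have h3 : n * ((i + 1) * l) = i * (n * l) + n * l := by ring
          omega
        · intro p _ hp
          rw [(hPm i hi).2.1 p (by simp at hp; omega), zero_mul]
      rw [hs, hs2, hω2 i hi]
      exact one_ne_zero
    · rw [← hd]
      simp only [f]
      congr 1
      funext k
      rw [cf_vec, if_pos (le_add_of_nonneg_left (Int.natCast_nonneg _))]
      have e : n * (((Nat.nth F k / n : ℕ) : ℤ) + 1 - 1).toNat + Nat.nth F k % n = Nat.nth F k := by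
        rw [add_sub_cancel_right, Int.toNat_natCast]
        exact Nat.div_add_mod _ _
      simp only [e]
      rw [hω1 _ (Nat.nth_mem_of_infinite hFinf k), Equiv.apply_symm_apply,
        Nat.count_nth_of_infinite hFinf]
  have hr0 : 0 < (n : ℝ) - 1 / l := by
    have h1 : (1 : ℝ) ≤ n := by exact_mod_cast hn
    have h2 : (2 : ℝ) ≤ l := by exact_mod_cast hl
    have h3 : 1 / (l : ℝ) ≤ 1 / 2 := one_div_le_one_div_of_le (by norm_num) h2
    linarith
  set r : ℝ := (n : ℝ) - 1 / l with hr
  have hold : HolderOnWith (Real.toNNReal ((Fintype.card K : ℝ) ^ (1 + 2 * r))) (Real.toNNReal r)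
      f G := by
    intro x hx y hy
    rcases eq_or_ne x y with rfl | hxy
    · simp
    have hd0 : 0 < dist x y := dist_pos.2 hxy
    have hd1 : dist x y ≤ 1 := by
      rw [dist_pi_le_iff zero_le_one]
      intro j
      change fnorm (x j - y j) ≤ 1
      rw [sub_eq_add_neg]
      refine (fnorm_add_le _ _).trans ?_
      rw [fnorm_neg]
      exact max_le (hx.1 j).le (hy.1 j).le
    obtain ⟨N, hN1, hN2⟩ := exists_nat_pow_near_of_lt_one hd0 hd1 (inv_pos.2 hq0)
      (inv_lt_one_of_one_lt₀ hq)
    have hagree : ∀ j, ∀ i < (N : ℤ), cf (x j) i = cf (y j) i := by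
      intro j i hi
      have h1 : fnorm (x j - y j) ≤ (Fintype.card K : ℝ) ^ (-(N : ℤ)) := by
        have : dist (x j) (y j) ≤ dist x y := dist_le_pi_dist x y j
        refine le_trans this (hN2.trans (le_of_eq ?_))
        rw [zpow_neg, zpow_natCast, inv_pow]
      rw [fnorm_le_iff] at h1
      have h2 := h1 i hi
      rw [cf_sub] at h2
      exact sub_eq_zero.1 h2
    have hdig : |f x - f y| ≤ ((Fintype.card K : ℝ) ^ Nat.count F (n * (N - 1)))⁻¹ := by
      apply Real.abs_ofDigits_sub_ofDigits_le
      intro k hk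
      have h1 : Nat.nth F k < n * (N - 1) := Nat.nth_lt_of_lt_count hk
      have h2 : Nat.nth F k / n < N - 1 := Nat.div_lt_of_lt_mul h1
      have h3 : Nat.nth F k / n + 1 < N := Nat.add_lt_of_lt_sub h2
      rw [hagree _ _ (by exact_mod_cast h3)]
    have hbound : dist (f x) (f y) ≤ (Fintype.card K : ℝ) ^ (1 + 2 * r) * dist x y ^ r := by
      rw [Real.dist_eq]
      refine hdig.trans ?_
      have h1 : ((Fintype.card K : ℝ) ^ (-((N : ℝ) + 1))) ≤ dist x y := by
        refine le_trans (le_of_eq ?_) hN1.le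
        rw [Real.rpow_neg hq0.le, inv_pow]
        congr 1
        exact_mod_cast Real.rpow_natCast (Fintype.card K : ℝ) (N + 1)
      have h2 : ((Fintype.card K : ℝ) ^ (-((N : ℝ) + 1))) ^ r ≤ dist x y ^ r :=
        Real.rpow_le_rpow (Real.rpow_nonneg hq0.le _) h1 hr0.le
      refine le_trans ?_ (mul_le_mul_of_nonneg_left h2 (Real.rpow_nonneg hq0.le _))
      rw [← Real.rpow_mul hq0.le, ← Real.rpow_add hq0, ← Real.rpow_natCast, ← Real.rpow_neg hq0.le]
      apply Real.rpow_le_rpow_of_exponent_le hq.le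
      have h3 := hcount (N - 1)
      have h4 : (N : ℝ) - 1 ≤ ((N - 1 : ℕ) : ℝ) := by
        have : (N : ℝ) ≤ ((N - 1 + 1 : ℕ) : ℝ) := by exact_mod_cast (by omega)
        push_cast at this
        linarith
      have h5 : r * ((N : ℝ) - 1) ≤ r * ((N - 1 : ℕ) : ℝ) := mul_le_mul_of_nonneg_left h4 hr0.le
      linarith
    rw [edist_dist, edist_dist, Real.coe_toNNReal _ hr0.le, ENNReal.ofReal_rpow_of_pos hd0]
    rw [← ENNReal.ofReal, ← ENNReal.ofReal_mul (Real.rpow_nonneg hq0.le _)]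
    exact ENNReal.ofReal_le_ofReal hbound
  have h1 : (1 : ℝ≥0∞) ≤ dimH (f '' G) := by
    have : dimH (Set.Ioo (0 : ℝ) 1) = 1 := by
      rw [Real.dimH_of_nonempty_interior]
      · simp
      · rw [interior_Ioo]; exact ⟨1 / 2, by norm_num, by norm_num⟩
    rw [← this]
    exact dimH_mono hsurj
  have h2 := h1.trans (hold.dimH_image_le (Real.toNNReal_pos.2 hr0))
  have h3 : ENNReal.ofReal r ≤ dimH G := by
    have h4 : (Real.toNNReal r : ℝ≥0∞) ≠ 0 := by
      simpa using hr0
    rw [ENNReal.le_div_iff_mul_le (Or.inl h4) (Or.inl ENNReal.coe_ne_top), one_mul] at h2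
    exact h2
  exact h3.trans (dimH_mono hG)

lemma bad_anti (A : Matrix (Fin n) (Fin m) (FF K)) {ε ε' : ℝ} (h : ε ≤ ε') : Bad A ε' ⊆ Bad A ε :=
  fun _ hθ => ⟨hθ.1, (ENNReal.ofReal_le_ofReal h).trans hθ.2⟩

lemma cont_f (c : ℝ) : ContinuousOn (fun x : ℝ => c / Real.log (1 + 1 / x)) (Set.Ici 0) := by
  intro x hx
  rcases eq_or_lt_of_le (Set.mem_Ici.1 hx) with rfl | hx
  · rw [← continuousWithinAt_Ioi_iff_Ici]
    unfold ContinuousWithinAt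
    rw [show (fun x : ℝ => c / Real.log (1 + 1 / x)) 0 = 0 by simp]
    apply Tendsto.div_atTop tendsto_const_nhds
    have h0 : Tendsto (fun x : ℝ => 1 / x) (nhdsWithin 0 (Set.Ioi 0)) atTop := by
      simpa using (tendsto_inv_nhdsGT_zero (𝕜 := ℝ))
    exact Real.tendsto_log_atTop.comp (tendsto_atTop_add_const_left _ 1 h0)
  · apply ContinuousAt.continuousWithinAt
    have h1 : 1 < 1 + 1 / x := by
      have : 0 < 1 / x := by positivity
      linarith
    have h2 : Real.log (1 + 1 / x) ≠ 0 := (Real.log_pos h1).ne'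
    have h3 : 1 + 1 / x ≠ 0 := by linarith
    have h4 : ContinuousAt (fun x : ℝ => 1 + 1 / x) x := by
      apply ContinuousAt.add continuousAt_const
      exact continuousAt_const.div continuousAt_id hx.ne'
    exact continuousAt_const.div (h4.log h3) h2

end Aux
end FPSDA

/-- For any non-degenerate matrix `A ∈ M_{n,m}(𝔽_q((z⁻¹)))`: for every integer `l ≥ 2` the
set `Bad^ε(A)` with `ε = q^{-(2l+2) - m/n}` has Hausdorff dimension at least `n - 1/l`;
in particular there is a continuous function `f : ℝ₊ → ℝ₊` with `f 0 = 0` such that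
`dim_H Bad^ε(A) ≥ n - f ε` for every `0 < ε ≤ q^{-m/n - 6}`. -/
theorem dimH_Bad_lower {K : Type*} [Field K] [Fintype K] {m n : ℕ}
    (hm : 0 < m) (hn : 0 < n)
    (A : Matrix (Fin n) (Fin m) (FF K)) (hA : Nondegenerate A) :
    (∀ l : ℕ, 2 ≤ l →
      ENNReal.ofReal ((n : ℝ) - 1 / (l : ℝ)) ≤
        dimH (Bad A ((Fintype.card K : ℝ) ^ (-(2 * (l : ℝ) + 2) - (m : ℝ) / (n : ℝ))))) ∧
    ∃ f : ℝ → ℝ, ContinuousOn f (Set.Ici 0) ∧ f 0 = 0 ∧ (∀ x : ℝ, 0 ≤ x → 0 ≤ f x) ∧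
      ∀ ε : ℝ, 0 < ε → ε ≤ (Fintype.card K : ℝ) ^ (-(m : ℝ) / (n : ℝ) - 6) →
        ENNReal.ofReal ((n : ℝ) - f ε) ≤ dimH (Bad A ε) := by
  have hq := one_lt_q (K := K)
  have hq2 : (2 : ℝ) ≤ Fintype.card K := by
    exact_mod_cast (Fintype.one_lt_card : 1 < Fintype.card K)
  have hq0 : (0 : ℝ) < Fintype.card K := by linarith
  have hlog : 0 < Real.log (Fintype.card K : ℝ) := Real.log_pos hq
  have key : ∀ l : ℕ, 2 ≤ l →
      ENNReal.ofReal ((n : ℝ) - 1 / (l : ℝ)) ≤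
        dimH (Bad A ((Fintype.card K : ℝ) ^ (-(2 * (l : ℝ) + 2) - (m : ℝ) / (n : ℝ)))) := by
    intro l hl
    refine (dim_lower hm hn A hA l hl).trans (dimH_mono (bad_anti A ?_))
    apply Real.rpow_le_rpow_of_exponent_le hq.le
    have : (0 : ℝ) ≤ l := Nat.cast_nonneg l
    linarith
  have hmn : 0 ≤ (m : ℝ) / n := by positivity
  refine ⟨key, fun x => (((m : ℝ) / n + 9) * Real.log (Fintype.card K : ℝ)) /
    Real.log (1 + 1 / x), cont_f _, by simp, ?_, ?_⟩
  · intro x hx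
    have : 0 ≤ 1 / x := by positivity
    have := Real.log_nonneg (x := 1 + 1 / x) (by linarith)
    positivity
  · intro ε hε hε1
    set q : ℝ := (Fintype.card K : ℝ) with hqdef
    set L : ℝ := -(Real.log ε / Real.log q) - (m : ℝ) / n with hL
    have hLe : Real.log ε = -(L + (m : ℝ) / n) * Real.log q := by
      rw [hL]; field_simp; ring
    have hεL : ε = q ^ (-(L + (m : ℝ) / n)) := by
      rw [← Real.log_injOn_pos.eq_iff (Set.mem_Ioi.2 hε)
        (Set.mem_Ioi.2 (Real.rpow_pos_of_pos hq0 _)), Real.log_rpow hq0, hLe]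
    have hL6 : 6 ≤ L := by
      have h1 := hε1
      rw [hεL, Real.rpow_le_rpow_left_iff hq] at h1
      have : -(m : ℝ) / n = -((m : ℝ) / n) := by ring
      linarith
    set l := ⌊(L - 2) / 2⌋₊ with hl
    have hl1 : (l : ℝ) ≤ (L - 2) / 2 := Nat.floor_le (by linarith)
    have hl2 : (L - 2) / 2 < l + 1 := Nat.lt_floor_add_one _
    have hl3 : 2 ≤ l := Nat.le_floor (by push_cast; linarith)
    have hl4 : (2 : ℝ) ≤ l := by exact_mod_cast hl3
    refine le_trans (ENNReal.ofReal_le_ofReal ?_) ((key l hl3).trans (dimH_mono (bad_anti A ?_)))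
    · have hε' : ε ≤ 1 := by
        rw [hεL]
        apply Real.rpow_le_one_of_one_le_of_nonpos hq.le
        linarith
      have h1 : 1 ≤ 1 / ε := by rw [le_div_iff₀ hε]; linarith
      have hpos : 0 < Real.log (1 + 1 / ε) := Real.log_pos (by linarith)
      have h2 : Real.log (1 + 1 / ε) ≤ Real.log q + (L + (m : ℝ) / n) * Real.log q := by
        have : Real.log (1 + 1 / ε) ≤ Real.log (q * (1 / ε)) := by
          apply Real.log_le_log (by linarith)
          nlinarith
        refine this.trans (le_of_eq ?_)
        rw [Real.log_mul hq0.ne' (by linarith), one_div, Real.log_inv, hLe]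
        ring
      have h3 : 1 / (l : ℝ) ≤ (((m : ℝ) / n + 9) * Real.log q) / Real.log (1 + 1 / ε) := by
        rw [div_le_div_iff₀ (by linarith) hpos, one_mul]
        refine h2.trans ?_
        have h4 : 1 + (L + (m : ℝ) / n) ≤ ((m : ℝ) / n + 9) * l := by nlinarith
        nlinarith
      simp only
      linarith
    · conv_lhs => rw [hεL]
      apply Real.rpow_le_rpow_of_exponent_le hq.le
      linarith
end
end
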